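/- arXiv:1305.3462 — 3 statements merged into one kernel-verified Lean document; each statement's English description precedes it below -/
import Mathlib

section
/- Let f : [a,b] → ℝ be ν-Hölder continuous and g : [a,b] → ℝ be μ-Hölder continuous with μ + ν > 1. Then the Young integral ∫_a^b f dg exists as a limit of Riemann–Stieltjes sums, and there is a constant K_{μ,ν} depending only on μ, ν such that |∫_a^b f dg| ≤ K_{μ,ν} ‖g‖_{a,b,μ} (‖f‖_{a,b,∞} (b−a)^μ + ‖f‖_{a,b,ν} (b−a)^{μ+ν}). -/
/-!
The germ `A s t = f s * (g t - g s)` is additive up to an error of order `(t - s) ^ (μ + ν)`, of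
exponent larger than `1`. Cutting a partition of `[s, t]` at the cell that contains the midpoint
shows by induction that the sum of `A` along it differs from `A s t` by at most a multiple of
`(t - s) ^ (μ + ν)`. Hence the sums of `A` along a common refinement of two partitions provide a
function whose increments agree with `A` up to this error on the cells of both of them. The errors
along a partition of mesh `δ` add up to `O(δ ^ (μ + ν - 1))`, so the Riemann sums are Cauchy as the
mesh tends to `0`; comparing the limit with the partition into a single cell gives the estimate.
-/

open Filter Set Topology

lemma sum_succ_sub_castSucc {E : Type*} [AddCommGroup E] {n : ℕ} (u : Fin (n + 1) → E) :
    ∑ i : Fin n, (u i.succ - u i.castSucc) = u (Fin.last n) - u 0 := by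
  rw [Finset.sum_sub_distrib, sub_eq_sub_iff_add_eq_add, add_comm, ← Fin.sum_univ_succ,
    Fin.sum_univ_castSucc, add_comm]

lemma exists_monotone_nat_range_eq {α : Type*} [LinearOrder α] {F : Finset α}
    (hF : F.Nonempty) : ∃ x : ℕ → α, Monotone x ∧ Set.range x = F := by
  obtain ⟨k, hk⟩ := Nat.exists_eq_succ_of_ne_zero hF.card_ne_zero
  refine ⟨fun i ↦ F.orderEmbOfFin hk (Fin.clamp i k),
    (F.orderEmbOfFin hk).monotone.comp Fin.clamp_monotone, ?_⟩
  have hsurj : Function.Surjective (fun i ↦ Fin.clamp i k) := fun j ↦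
    ⟨j, Fin.ext (min_eq_left (Nat.lt_succ_iff.1 j.2))⟩
  rw [← F.range_orderEmbOfFin hk]
  exact hsurj.range_comp _

lemma cauchySeq_of_dist_le_add {α : Type*} [PseudoMetricSpace α] {u : ℕ → α} {r : ℕ → ℝ}
    (hu : ∀ m n, dist (u m) (u n) ≤ r m + r n) (hr : Tendsto r atTop (𝓝 0)) : CauchySeq u := by
  rw [cauchySeq_iff_tendsto_dist_atTop_0, ← prod_atTop_atTop_eq]
  exact squeeze_zero (fun _ ↦ dist_nonneg) (fun p ↦ hu p.1 p.2) <| by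
    simpa using (hr.comp tendsto_fst).add (hr.comp tendsto_snd)

lemma rpow_eq_mul_rpow_sub_one {d θ : ℝ} (hd : 0 ≤ d) (hθ : θ ≠ 0) :
    d ^ θ = d * d ^ (θ - 1) := by
  rw [← Real.rpow_one_add' hd (by simpa using hθ), add_sub_cancel]

lemma tendsto_const_mul_rpow_nhds_zero (c : ℝ) {r : ℝ} (hr : 0 < r) :
    Tendsto (fun δ : ℝ ↦ c * δ ^ r) (𝓝 0) (𝓝 0) := by
  simpa [Real.zero_rpow hr.ne'] using ((Real.continuous_rpow_const hr.le).tendsto 0).const_mul c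

lemma exists_pos_const_mul_rpow_le (c : ℝ) {r ε : ℝ} (hr : 0 < r) (hε : 0 < ε) :
    ∃ δ > 0, c * δ ^ r ≤ ε :=
  (eventually_mem_nhdsWithin.and (((tendsto_const_mul_rpow_nhds_zero c hr).mono_left
    (nhdsWithin_le_nhds (s := Ioi 0))).eventually_le_const hε)).exists

section FinePartition

/-- The points `t 0 ≤ ⋯ ≤ t n` form a partition of `[a, b]` of mesh at most `δ`. Repeated points
are allowed. -/
structure IsFinePartition (a b δ : ℝ) {n : ℕ} (t : Fin (n + 1) → ℝ) : Prop where
  monotone : Monotone t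
  apply_zero : t 0 = a
  apply_last : t (Fin.last n) = b
  mesh_le : ∀ i : Fin n, t i.succ - t i.castSucc ≤ δ

/-- The Riemann sum of a two-parameter function (a germ) `A` along a finite family of points. The
Riemann–Stieltjes sums of `∫ f dg` are those of `A s t = f s * (g t - g s)`. -/
def riemannSum {E : Type*} [AddCommMonoid E] (A : ℝ → ℝ → E) {n : ℕ} (t : Fin (n + 1) → ℝ) : E :=
  ∑ i : Fin n, A (t i.castSucc) (t i.succ)

/-- The points that cut `[a, b]` into `n + 1` cells of equal length. -/
noncomputable def equipartition (a b : ℝ) (n : ℕ) (i : Fin (n + 1 + 1)) : ℝ :=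
  a + i * ((b - a) / (n + 1))

lemma isFinePartition_equipartition {a b : ℝ} (hab : a ≤ b) (n : ℕ) :
    IsFinePartition a b ((b - a) / (n + 1)) (equipartition a b n) where
  monotone i j hij := by
    have hij' : (i : ℝ) ≤ j := by exact_mod_cast hij
    have := sub_nonneg.2 hab
    unfold equipartition
    gcongr
  apply_zero := by simp [equipartition]
  apply_last := by
    simp only [equipartition, Fin.val_last, Nat.cast_add, Nat.cast_one]
    field_simp
    ring
  mesh_le i := by
    simp only [equipartition, Fin.val_succ, Fin.val_castSucc, Nat.cast_add, Nat.cast_one]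
    linarith

lemma isFinePartition_pair {a b : ℝ} (hab : a ≤ b) : IsFinePartition a b (b - a) ![a, b] where
  monotone := by simpa [Fin.monotone_iff_le_succ] using hab
  apply_zero := rfl
  apply_last := rfl
  mesh_le := by simp

namespace IsFinePartition

variable {a b δ : ℝ} {n : ℕ} {t : Fin (n + 1) → ℝ}

lemma mem_Icc (ht : IsFinePartition a b δ t) (i : Fin (n + 1)) : t i ∈ Icc a b :=
  ⟨ht.apply_zero ▸ ht.monotone (Fin.zero_le i), ht.apply_last ▸ ht.monotone (Fin.le_last i)⟩

lemma sum_rpow_le {θ : ℝ} (hθ : 1 < θ) (ht : IsFinePartition a b δ t) :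
    ∑ i : Fin n, (t i.succ - t i.castSucc) ^ θ ≤ (b - a) * δ ^ (θ - 1) := by
  have hcell (i : Fin n) : (t i.succ - t i.castSucc) ^ θ ≤
      (t i.succ - t i.castSucc) * δ ^ (θ - 1) := by
    have hpos : 0 ≤ t i.succ - t i.castSucc := sub_nonneg.2 (ht.monotone i.castSucc_lt_succ.le)
    calc (t i.succ - t i.castSucc) ^ θ
        = (t i.succ - t i.castSucc) * (t i.succ - t i.castSucc) ^ (θ - 1) :=
          rpow_eq_mul_rpow_sub_one hpos (by linarith)
      _ ≤ (t i.succ - t i.castSucc) * δ ^ (θ - 1) := by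
          gcongr
          exact ht.mesh_le i
  calc ∑ i : Fin n, (t i.succ - t i.castSucc) ^ θ
      ≤ ∑ i : Fin n, (t i.succ - t i.castSucc) * δ ^ (θ - 1) :=
        Finset.sum_le_sum fun i _ ↦ hcell i
    _ = (b - a) * δ ^ (θ - 1) := by
        rw [← Finset.sum_mul, sum_succ_sub_castSucc, ht.apply_zero, ht.apply_last]

lemma norm_riemannSum_sub_le {E : Type*} [SeminormedAddCommGroup E] {A : ℝ → ℝ → E} {J : ℝ → E}
    {D θ : ℝ} (hθ : 1 < θ) (hD : 0 ≤ D) (ht : IsFinePartition a b δ t)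
    (hJ : ∀ i : Fin n, ‖J (t i.succ) - J (t i.castSucc) - A (t i.castSucc) (t i.succ)‖
      ≤ D * (t i.succ - t i.castSucc) ^ θ) :
    ‖riemannSum A t - (J b - J a)‖ ≤ D * (b - a) * δ ^ (θ - 1) := by
  have htelescope : J b - J a = ∑ i : Fin n, (J (t i.succ) - J (t i.castSucc)) := by
    rw [sum_succ_sub_castSucc (fun i ↦ J (t i)), ht.apply_zero, ht.apply_last]
  calc ‖riemannSum A t - (J b - J a)‖
      = ‖∑ i : Fin n, (J (t i.succ) - J (t i.castSucc) - A (t i.castSucc) (t i.succ))‖ := by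
        rw [norm_sub_rev, htelescope, riemannSum, ← Finset.sum_sub_distrib]
    _ ≤ ∑ i : Fin n, D * (t i.succ - t i.castSucc) ^ θ := norm_sum_le_of_le _ fun i _ ↦ hJ i
    _ ≤ D * (b - a) * δ ^ (θ - 1) := by
        rw [← Finset.mul_sum, mul_assoc]
        exact mul_le_mul_of_nonneg_left (ht.sum_rpow_le hθ) hD

end IsFinePartition

end FinePartition

section SewingConst

/-- The constant of the sewing lemma for germs whose additivity defect has exponent `θ`. It solves
`K = 2 ^ (1 - θ) * K + 2`: two halves of the interval and two additivity defects. -/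
noncomputable def sewingConst (θ : ℝ) : ℝ := 2 / (1 - 2 ^ (1 - θ))

variable {θ : ℝ}

lemma one_sub_two_rpow_pos (hθ : 1 < θ) : 0 < 1 - (2 : ℝ) ^ (1 - θ) :=
  sub_pos.2 (Real.rpow_lt_one_of_one_lt_of_neg one_lt_two (by linarith))

lemma one_le_sewingConst (hθ : 1 < θ) : 1 ≤ sewingConst θ := by
  rw [sewingConst, one_le_div (one_sub_two_rpow_pos hθ)]
  linarith [Real.rpow_pos_of_pos two_pos (1 - θ)]

lemma sewingConst_pos (hθ : 1 < θ) : 0 < sewingConst θ :=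
  one_pos.trans_le (one_le_sewingConst hθ)

lemma two_mul_sewingConst_mul_half_rpow_add (hθ : 1 < θ) {d : ℝ} (hd : 0 ≤ d) :
    2 * (sewingConst θ * (d / 2) ^ θ) + 2 * d ^ θ = sewingConst θ * d ^ θ := by
  have hne := (one_sub_two_rpow_pos hθ).ne'
  have hhalf : 2 * (d / 2) ^ θ = 2 ^ (1 - θ) * d ^ θ := by
    rw [Real.div_rpow hd two_pos.le, Real.rpow_sub two_pos, Real.rpow_one]
    ring
  have hfix : 2 ^ (1 - θ) * sewingConst θ + 2 = sewingConst θ := by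
    rw [sewingConst]
    field_simp
    ring
  linear_combination sewingConst θ * hhalf + d ^ θ * hfix

end SewingConst

section Sewing

/-- The germ `A` is additive on `[a, b]` up to an error `C * (t - s) ^ θ`; this is the hypothesis of
the sewing lemma. -/
def AlmostAdditiveOn {E : Type*} [NormedAddCommGroup E] (A : ℝ → ℝ → E) (C θ a b : ℝ) : Prop :=
  ∀ ⦃s u t⦄, a ≤ s → s ≤ u → u ≤ t → t ≤ b → ‖A s t - A s u - A u t‖ ≤ C * (t - s) ^ θ

namespace AlmostAdditiveOn

variable {E : Type*} [NormedAddCommGroup E] {A : ℝ → ℝ → E} {C θ a b : ℝ}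

lemma apply_self (hA : AlmostAdditiveOn A C θ a b) (hθ : θ ≠ 0) {s : ℝ} (hs : s ∈ Icc a b) :
    A s s = 0 := by
  simpa [Real.zero_rpow hθ] using hA hs.1 le_rfl le_rfl hs.2

lemma norm_sub_sub_sub_le (hA : AlmostAdditiveOn A C θ a b) (hC : 0 ≤ C) (hθ : 0 ≤ θ)
    {s u v t : ℝ} (has : a ≤ s) (hsu : s ≤ u) (huv : u ≤ v) (hvt : v ≤ t) (htb : t ≤ b) :
    ‖A s t - A s u - A u v - A v t‖ ≤ 2 * (C * (t - s) ^ θ) := by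
  have hleft := hA has hsu (huv.trans hvt) htb
  have hright : ‖A u t - A u v - A v t‖ ≤ C * (t - s) ^ θ := by
    refine (hA (has.trans hsu) huv hvt htb).trans ?_
    have := sub_nonneg.2 (huv.trans hvt)
    gcongr
  calc ‖A s t - A s u - A u v - A v t‖
      = ‖(A s t - A s u - A u t) + (A u t - A u v - A v t)‖ := by congr 1; abel
    _ ≤ 2 * (C * (t - s) ^ θ) := by
        rw [two_mul]
        exact norm_add_le_of_le hleft hright

lemma sum_Ico_eq_zero (hA : AlmostAdditiveOn A C θ a b) (hθ : θ ≠ 0) {x : ℕ → ℝ} (hx : Monotone x)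
    (hxab : ∀ i, x i ∈ Icc a b) {m n : ℕ} (hmn : x m = x n) :
    ∑ i ∈ Finset.Ico m n, A (x i) (x (i + 1)) = 0 := by
  have hconst {i} (hmi : m ≤ i) (hin : i ≤ n) : x i = x m :=
    le_antisymm ((hx hin).trans hmn.ge) (hx hmi)
  refine Finset.sum_eq_zero fun i hi ↦ ?_
  obtain ⟨hmi, hin⟩ := Finset.mem_Ico.1 hi
  rw [hconst hmi hin.le, hconst (by lia) hin, hA.apply_self hθ (hxab m)]

lemma norm_sum_Ico_sub_le_of_cut (hA : AlmostAdditiveOn A C θ a b) (hC : 0 ≤ C) (hθ : 0 ≤ θ)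
    {x : ℕ → ℝ} (hx : Monotone x) (hxab : ∀ i, x i ∈ Icc a b) {m j n : ℕ} (hmj : m ≤ j)
    (hjn : j < n) {η : ℝ}
    (hleft : ‖∑ i ∈ Finset.Ico m j, A (x i) (x (i + 1)) - A (x m) (x j)‖ ≤ η)
    (hright : ‖∑ i ∈ Finset.Ico (j + 1) n, A (x i) (x (i + 1)) - A (x (j + 1)) (x n)‖ ≤ η) :
    ‖∑ i ∈ Finset.Ico m n, A (x i) (x (i + 1)) - A (x m) (x n)‖
      ≤ 2 * η + 2 * (C * (x n - x m) ^ θ) := by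
  have hdefect := hA.norm_sub_sub_sub_le hC hθ (hxab m).1 (hx hmj) (hx j.le_succ) (hx hjn)
    (hxab n).2
  calc ‖∑ i ∈ Finset.Ico m n, A (x i) (x (i + 1)) - A (x m) (x n)‖
      = ‖(∑ i ∈ Finset.Ico m j, A (x i) (x (i + 1)) - A (x m) (x j))
          + (∑ i ∈ Finset.Ico (j + 1) n, A (x i) (x (i + 1)) - A (x (j + 1)) (x n))
          - (A (x m) (x n) - A (x m) (x j) - A (x j) (x (j + 1)) - A (x (j + 1)) (x n))‖ := by
        rw [← Finset.sum_Ico_consecutive _ hmj hjn.le, Finset.sum_eq_sum_Ico_succ_bot hjn]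
        congr 1
        abel
    _ ≤ 2 * η + 2 * (C * (x n - x m) ^ θ) := by
        rw [two_mul η]
        exact norm_sub_le_of_le (norm_add_le_of_le hleft hright) hdefect

lemma norm_sum_Ico_sub_le (hA : AlmostAdditiveOn A C θ a b) (hθ : 1 < θ) (hC : 0 ≤ C) {x : ℕ → ℝ}
    (hx : Monotone x) (hxab : ∀ i, x i ∈ Icc a b) {m n : ℕ} (hmn : m ≤ n) :
    ‖∑ i ∈ Finset.Ico m n, A (x i) (x (i + 1)) - A (x m) (x n)‖
      ≤ sewingConst θ * C * (x n - x m) ^ θ := by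
  induction hk : n - m using Nat.strong_induction_on generalizing m n with
  | _ k ih =>
  have hθ0 : 0 < θ := by linarith
  have hK := sewingConst_pos hθ
  rcases (hx hmn).eq_or_lt with heq | hlt
  · simp [hA.sum_Ico_eq_zero hθ0.ne' hx hxab heq, ← heq, hA.apply_self hθ0.ne' (hxab m),
      Real.zero_rpow hθ0.ne']
  obtain ⟨j, ⟨hmj, hjn⟩, hj, hj'⟩ : ∃ j ∈ Ico m n, (x m + x n) / 2 ∈ Ioc (x j) (x (j + 1)) := by
    have hmid : (x m + x n) / 2 ∈ Ioc (x m) (x n) := ⟨by linarith, by linarith⟩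
    simpa only [← hx.biUnion_Ico_Ioc_map_succ m n, mem_iUnion₂, exists_prop,
      Order.succ_eq_add_one] using hmid
  have half {d : ℝ} (hd : 0 ≤ d) (hd' : d ≤ (x n - x m) / 2) :
      sewingConst θ * C * d ^ θ ≤ sewingConst θ * C * ((x n - x m) / 2) ^ θ := by gcongr
  have hleft := (ih (j - m) (by lia) hmj rfl).trans
    (half (sub_nonneg.2 (hx hmj)) (by linarith))
  have hright := (ih (n - (j + 1)) (by lia) hjn rfl).trans
    (half (sub_nonneg.2 (hx hjn)) (by linarith))
  calc ‖∑ i ∈ Finset.Ico m n, A (x i) (x (i + 1)) - A (x m) (x n)‖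
      ≤ 2 * (sewingConst θ * C * ((x n - x m) / 2) ^ θ) + 2 * (C * (x n - x m) ^ θ) :=
        hA.norm_sum_Ico_sub_le_of_cut hC hθ0.le hx hxab hmj hjn hleft hright
    _ = sewingConst θ * C * (x n - x m) ^ θ := by
        linear_combination C * two_mul_sewingConst_mul_half_rpow_add hθ (sub_nonneg.2 hlt.le)

lemma exists_approx_primitive (hA : AlmostAdditiveOn A C θ a b) (hθ : 1 < θ) (hC : 0 ≤ C)
    {F : Finset ℝ} (hF : ∀ y ∈ F, y ∈ Icc a b) :
    ∃ J : ℝ → E, ∀ s ∈ F, ∀ t ∈ F, s ≤ t →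
      ‖J t - J s - A s t‖ ≤ sewingConst θ * C * (t - s) ^ θ := by
  rcases F.eq_empty_or_nonempty with rfl | hne
  · exact ⟨0, by simp⟩
  obtain ⟨x, hx, hrange⟩ := exists_monotone_nat_range_eq hne
  have hxab (i : ℕ) : x i ∈ Icc a b := hF _ (Finset.mem_coe.1 (hrange ▸ mem_range_self i))
  have hsurj : ∀ y ∈ F, ∃ i, x i = y := fun y hy ↦ by
    rwa [← mem_range, hrange, Finset.mem_coe]
  choose! idx hidx using hsurj
  refine ⟨fun y ↦ ∑ i ∈ Finset.range (idx y), A (x i) (x (i + 1)), fun s hs t ht hst ↦ ?_⟩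
  rcases hst.eq_or_lt with rfl | hlt
  · have hθ0 : θ ≠ 0 := by linarith
    simp [hA.apply_self hθ0 (hF s hs), Real.zero_rpow hθ0]
  have hle : idx s ≤ idx t := (hx.reflect_lt (by rwa [hidx s hs, hidx t ht])).le
  simpa only [Finset.sum_Ico_eq_sub _ hle, hidx s hs, hidx t ht] using
    hA.norm_sum_Ico_sub_le hθ hC hx hxab hle

lemma dist_riemannSum_le (hA : AlmostAdditiveOn A C θ a b) (hθ : 1 < θ) (hC : 0 ≤ C)
    {m n : ℕ} {t : Fin (m + 1) → ℝ} {u : Fin (n + 1) → ℝ} {δ η : ℝ}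
    (ht : IsFinePartition a b δ t) (hu : IsFinePartition a b η u) :
    dist (riemannSum A t) (riemannSum A u)
      ≤ sewingConst θ * C * (b - a) * δ ^ (θ - 1) +
        sewingConst θ * C * (b - a) * η ^ (θ - 1) := by
  have hD : 0 ≤ sewingConst θ * C := mul_nonneg (sewingConst_pos hθ).le hC
  let F : Finset ℝ := Finset.univ.image t ∪ Finset.univ.image u
  have htF (i) : t i ∈ F := Finset.mem_union_left _ (Finset.mem_image_of_mem t (Finset.mem_univ i))
  have huF (i) : u i ∈ F := Finset.mem_union_right _ (Finset.mem_image_of_mem u (Finset.mem_univ i))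
  have hF : ∀ y ∈ F, y ∈ Icc a b := by
    simp only [F, Finset.mem_union, Finset.mem_image, Finset.mem_univ, true_and]
    rintro _ (⟨i, rfl⟩ | ⟨i, rfl⟩)
    exacts [ht.mem_Icc i, hu.mem_Icc i]
  obtain ⟨J, hJ⟩ := hA.exists_approx_primitive hθ hC hF
  refine dist_triangle_right _ _ (J b - J a) |>.trans (add_le_add ?_ ?_)
  · exact dist_eq_norm (riemannSum A t) _ ▸ ht.norm_riemannSum_sub_le hθ hD fun i ↦
      hJ _ (htF _) _ (htF _) (ht.monotone i.castSucc_lt_succ.le)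
  · exact dist_eq_norm (riemannSum A u) _ ▸ hu.norm_riemannSum_sub_le hθ hD fun i ↦
      hJ _ (huF _) _ (huF _) (hu.monotone i.castSucc_lt_succ.le)

theorem exists_norm_riemannSum_sub_le [CompleteSpace E] (hA : AlmostAdditiveOn A C θ a b)
    (hab : a ≤ b) (hθ : 1 < θ) (hC : 0 ≤ C) :
    ∃ I : E, ∀ ⦃δ : ℝ⦄ ⦃n : ℕ⦄ ⦃t : Fin (n + 1) → ℝ⦄, IsFinePartition a b δ t →
      ‖riemannSum A t - I‖ ≤ sewingConst θ * C * (b - a) * δ ^ (θ - 1) := by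
  have hequi (n : ℕ) := isFinePartition_equipartition hab n
  have hmesh : Tendsto (fun n : ℕ ↦ (b - a) / (n + 1)) atTop (𝓝 0) := by
    simpa [div_eq_mul_inv] using
      (tendsto_one_div_add_atTop_nhds_zero_nat (𝕜 := ℝ)).const_mul (b - a)
  have hrate := (tendsto_const_mul_rpow_nhds_zero (sewingConst θ * C * (b - a))
    (sub_pos.2 hθ)).comp hmesh
  obtain ⟨I, hI⟩ := cauchySeq_tendsto_of_complete <| cauchySeq_of_dist_le_add
    (fun m n ↦ hA.dist_riemannSum_le hθ hC (hequi m) (hequi n)) hrate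
  refine ⟨I, fun δ n t ht ↦ ?_⟩
  have hbound := hrate.const_add (sewingConst θ * C * (b - a) * δ ^ (θ - 1))
  rw [add_zero] at hbound
  exact dist_eq_norm (riemannSum A t) I ▸ le_of_tendsto_of_tendsto' (tendsto_const_nhds.dist hI)
    hbound fun n ↦ hA.dist_riemannSum_le hθ hC ht (hequi n)

end AlmostAdditiveOn

end Sewing

section Young

variable {E F G : Type*} [NormedAddCommGroup E] [NormedSpace ℝ E] [NormedAddCommGroup F]
  [NormedSpace ℝ F] [NormedAddCommGroup G] [NormedSpace ℝ G]

lemma almostAdditiveOn_bilin_sub (B : E →L[ℝ] F →L[ℝ] G) {μ ν a b Cf Cg : ℝ} {f : ℝ → E}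
    {g : ℝ → F} (hμ : 0 ≤ μ) (hν : 0 ≤ ν) (hCf : 0 ≤ Cf) (hCg : 0 ≤ Cg)
    (hf : ∀ s t, a ≤ s → s ≤ t → t ≤ b → ‖f t - f s‖ ≤ Cf * (t - s) ^ ν)
    (hg : ∀ s t, a ≤ s → s ≤ t → t ≤ b → ‖g t - g s‖ ≤ Cg * (t - s) ^ μ) :
    AlmostAdditiveOn (fun s t ↦ B (f s) (g t - g s)) (‖B‖ * Cf * Cg) (μ + ν) a b := by
  intro s u t has hsu hut htb
  have hst : 0 ≤ t - s := by linarith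
  have hfu : ‖f u - f s‖ ≤ Cf * (t - s) ^ ν := by
    refine (hf s u has hsu (hut.trans htb)).trans ?_
    gcongr
  have hgt : ‖g t - g u‖ ≤ Cg * (t - s) ^ μ := by
    refine (hg u t (has.trans hsu) hut htb).trans ?_
    gcongr
  calc ‖B (f s) (g t - g s) - B (f s) (g u - g s) - B (f u) (g t - g u)‖
      = ‖B (f u - f s) (g t - g u)‖ := by
        rw [← norm_neg]
        simp only [map_sub, sub_apply]
        congr 1
        abel
    _ ≤ ‖B‖ * (Cf * (t - s) ^ ν) * (Cg * (t - s) ^ μ) := B.le_of_opNorm₂_le_of_le le_rfl hfu hgt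
    _ = ‖B‖ * Cf * Cg * (t - s) ^ (μ + ν) := by
        rw [Real.rpow_add_of_nonneg hst hμ hν]
        ring

theorem stmt2_general [CompleteSpace G] (B : E →L[ℝ] F →L[ℝ] G) {μ ν a b Cf Cg M : ℝ} {f : ℝ → E}
    {g : ℝ → F} (hμ : 0 ≤ μ) (hν : 0 ≤ ν) (hμν : 1 < μ + ν) (hab : a ≤ b)
    (hCf : 0 ≤ Cf) (hCg : 0 ≤ Cg)
    (hf : ∀ s t, a ≤ s → s ≤ t → t ≤ b → ‖f t - f s‖ ≤ Cf * (t - s) ^ ν)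
    (hg : ∀ s t, a ≤ s → s ≤ t → t ≤ b → ‖g t - g s‖ ≤ Cg * (t - s) ^ μ)
    (hfa : ‖f a‖ ≤ M) :
    ∃ I : G,
      (∀ ε > 0, ∃ δ > 0, ∀ (n : ℕ) (t : Fin (n + 1) → ℝ), IsFinePartition a b δ t →
        ‖∑ i : Fin n, B (f (t i.castSucc)) (g (t i.succ) - g (t i.castSucc)) - I‖ ≤ ε) ∧
      ‖I‖ ≤ sewingConst (μ + ν) * ‖B‖ * Cg * (M * (b - a) ^ μ + Cf * (b - a) ^ (μ + ν)) := by
  have hba : 0 ≤ b - a := sub_nonneg.2 hab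
  have hθ : 0 < μ + ν - 1 := sub_pos.2 hμν
  have hK := one_le_sewingConst hμν
  have hA := almostAdditiveOn_bilin_sub B hμ hν hCf hCg hf hg
  obtain ⟨I, hI⟩ := hA.exists_norm_riemannSum_sub_le hab hμν (by positivity)
  refine ⟨I, fun ε hε ↦ ?_, ?_⟩
  · obtain ⟨δ, hδ, hδε⟩ := exists_pos_const_mul_rpow_le
      (sewingConst (μ + ν) * (‖B‖ * Cf * Cg) * (b - a)) hθ hε
    exact ⟨δ, hδ, fun n t ht ↦ (hI ht).trans hδε⟩
  have hcell : ‖B (f a) (g b - g a) - I‖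
      ≤ sewingConst (μ + ν) * (‖B‖ * Cf * Cg) * (b - a) ^ (μ + ν) := by
    rw [rpow_eq_mul_rpow_sub_one hba (by linarith), ← mul_assoc]
    simpa [riemannSum] using hI (isFinePartition_pair hab)
  have hgerm : ‖B (f a) (g b - g a)‖ ≤ ‖B‖ * M * (Cg * (b - a) ^ μ) :=
    B.le_of_opNorm₂_le_of_le le_rfl hfa (hg a b le_rfl hab le_rfl)
  have hgerm0 : 0 ≤ ‖B‖ * M * (Cg * (b - a) ^ μ) := (norm_nonneg _).trans hgerm
  calc ‖I‖ ≤ ‖B (f a) (g b - g a)‖ + ‖B (f a) (g b - g a) - I‖ := norm_le_norm_add_norm_sub _ _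
    _ ≤ sewingConst (μ + ν) * (‖B‖ * M * (Cg * (b - a) ^ μ)) +
          sewingConst (μ + ν) * (‖B‖ * Cf * Cg) * (b - a) ^ (μ + ν) :=
        add_le_add (hgerm.trans (le_mul_of_one_le_left hgerm0 hK)) hcell
    _ = sewingConst (μ + ν) * ‖B‖ * Cg * (M * (b - a) ^ μ + Cf * (b - a) ^ (μ + ν)) := by ring

end Young

open Finset in
theorem stmt2 (μ ν : ℝ) (hμ : 0 < μ) (hμ1 : μ < 1) (hν : 0 < ν) (hν1 : ν < 1)
    (hμν : 1 < μ + ν) :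
    ∃ K : ℝ, 0 < K ∧ ∀ (a b : ℝ) (f g : ℝ → ℝ) (Cf Cg Mf : ℝ), a < b →
      0 ≤ Cf → 0 ≤ Cg → 0 ≤ Mf →
      (∀ s t, a ≤ s → s ≤ t → t ≤ b → |f t - f s| ≤ Cf * (t - s) ^ ν) →
      (∀ s t, a ≤ s → s ≤ t → t ≤ b → |g t - g s| ≤ Cg * (t - s) ^ μ) →
      (∀ x ∈ Set.Icc a b, |f x| ≤ Mf) →
      ∃ I : ℝ,
        (∀ ε > 0, ∃ δ > 0, ∀ (n : ℕ) (t : Fin (n + 1) → ℝ), 0 < n → Monotone t →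
          t 0 = a → t (Fin.last n) = b →
          (∀ i : Fin n, t i.succ - t i.castSucc ≤ δ) →
          |(∑ i : Fin n, f (t i.castSucc) * (g (t i.succ) - g (t i.castSucc))) - I| ≤ ε) ∧
        |I| ≤ K * Cg * (Mf * (b - a) ^ μ + Cf * (b - a) ^ (μ + ν)) := by
  refine ⟨sewingConst (μ + ν), sewingConst_pos hμν, ?_⟩
  intro a b f g Cf Cg Mf hab hCf hCg _ hf hg hfM
  obtain ⟨I, hlim, hI⟩ := stmt2_general (ContinuousLinearMap.mul ℝ ℝ) hμ.le hν.le hμν hab.le hCf hCg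
    hf hg (hfM a ⟨le_rfl, hab.le⟩)
  exact ⟨I, fun ε hε ↦ (hlim ε hε).imp fun δ ↦ And.imp_right fun h n t _ hmono h0 hlast hmesh ↦
    h n t ⟨hmono, h0, hlast, hmesh⟩, by simpa using hI⟩
end

section
/- Let ξ be an adapted process with |ξ_s| ≤ A a.s., V a standard Brownian motion, κ ∈ (0,1/2), α ∈ (0,2), z > 0, t > 0. Then E[exp(z ‖∫_0^· ξ_s dV_s‖_{0,t,κ}^α)] ≤ K_{A,κ,α,z,t} < ∞, where the constant depends only on A, κ, α, z, t. -/
open MeasureTheory ProbabilityTheory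

/-- The `κ`-Hölder seminorm of `f` on `[a,b]`. -/
noncomputable def holderSemi {E : Type*} [NormedAddCommGroup E] (f : ℝ → E) (a b κ : ℝ) : ℝ :=
  ⨆ p : {q : ℝ × ℝ // a ≤ q.1 ∧ q.1 < q.2 ∧ q.2 ≤ b},
    ‖f p.1.2 - f p.1.1‖ / (p.1.2 - p.1.1) ^ κ

/-!
Only the quadratic variation of the martingale `Z` matters. A conditional variance of at most
`v * (s - u)` over every `[u, s]` makes the increments sub-Gaussian: multiply one-step conditional
bounds along a fine grid, where `exp` may be replaced by a bounded function because the paths are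
continuous. Hence `exp (|Z s - Z u| ^ 2 / (8 * v * (s - u)))` has a bounded expectation, and so has
the weighted sum `W` of these quantities over all dyadic intervals. Along a path each term is at
most `W`, and chaining along the dyadic grids turns this into
`‖Z‖_κ ^ 2 ≤ D * (2 / (1 - 2 * κ) + log W)`, so that some square-exponential moment of the Hölder
seminorm is finite. As `α < 2`, Young's inequality bounds `z * x ^ α` by `x ^ 2 / D` plus a
constant.
-/

open Filter Set
open scoped ENNReal NNReal Topology

section TruncExp

/-- The exponential function cut off to zero outside `[-1, 1]`: unlike `exp` it is bounded, and
unlike `exp` it satisfies `truncExp x ≤ 1 + x + x ^ 2` on the whole line. -/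
noncomputable def truncExp : ℝ → ℝ := indicator (Icc (-1) 1) Real.exp

lemma truncExp_of_abs_le_one {x : ℝ} (hx : |x| ≤ 1) : truncExp x = Real.exp x :=
  indicator_of_mem (mem_Icc.2 (abs_le.1 hx)) _

lemma truncExp_nonneg (x : ℝ) : 0 ≤ truncExp x :=
  indicator_nonneg (fun y _ => (Real.exp_pos y).le) x

lemma truncExp_le_exp_one (x : ℝ) : truncExp x ≤ Real.exp 1 :=
  indicator_apply_le' (fun hx => Real.exp_le_exp.2 hx.2) fun _ => (Real.exp_pos 1).le

lemma truncExp_le_one_add_add_sq (x : ℝ) : truncExp x ≤ 1 + x + x ^ 2 := by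
  refine indicator_apply_le' (fun hx => ?_) fun _ => ?_
  · linarith [le_of_abs_le (Real.abs_exp_sub_one_sub_id_le (abs_le.2 hx))]
  · nlinarith [sq_nonneg (x + 1 / 2)]

lemma measurable_truncExp : Measurable truncExp :=
  Real.measurable_exp.indicator measurableSet_Icc

end TruncExp

section Grid

/-- The `k`-th endpoint of the subdivision of `[a, b]` into `n` intervals of equal length. -/
noncomputable def gridPoint (a b : ℝ) (n k : ℕ) : ℝ := a + k * ((b - a) / n)

variable {a b : ℝ} {n k : ℕ}

lemma gridPoint_zero_right (a b : ℝ) (n : ℕ) : gridPoint a b n 0 = a := by simp [gridPoint]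

lemma gridPoint_self (a b : ℝ) (hn : n ≠ 0) : gridPoint a b n n = b := by
  rw [gridPoint, mul_div_cancel₀ _ (Nat.cast_ne_zero.2 hn), add_sub_cancel]

lemma gridPoint_succ_sub (a b : ℝ) (n k : ℕ) :
    gridPoint a b n (k + 1) - gridPoint a b n k = (b - a) / n := by
  simp only [gridPoint]
  push_cast
  ring

lemma monotone_gridPoint (hab : a ≤ b) (n : ℕ) : Monotone (gridPoint a b n) := by
  intro k l hkl
  have := sub_nonneg.2 hab
  unfold gridPoint
  gcongr

lemma gridPoint_mem_Icc (hab : a ≤ b) (hk : k ≤ n) : gridPoint a b n k ∈ Icc a b := by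
  rcases eq_or_ne n 0 with rfl | hn
  · simp [gridPoint, hab]
  · exact ⟨(gridPoint_zero_right a b n).symm.le.trans (monotone_gridPoint hab n k.zero_le),
      (monotone_gridPoint hab n hk).trans (gridPoint_self a b hn).le⟩

lemma eventually_prod_truncExp_eq {f : ℝ → ℝ} (hab : a ≤ b) (hf : ContinuousOn f (Icc a b)) :
    ∀ᶠ n in atTop,
      ∏ k ∈ Finset.range n, truncExp (f (gridPoint a b n (k + 1)) - f (gridPoint a b n k)) =
        Real.exp (f b - f a) := by
  obtain ⟨δ, hδ, hfδ⟩ := Metric.uniformContinuousOn_iff.1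
    (isCompact_Icc.uniformContinuousOn_of_continuous hf) 1 one_pos
  filter_upwards [(tendsto_const_div_atTop_nhds_zero_nat (b - a)).eventually_lt_const hδ,
    eventually_ne_atTop 0] with n hmesh hn
  have hstep : ∀ k ∈ Finset.range n,
      truncExp (f (gridPoint a b n (k + 1)) - f (gridPoint a b n k)) =
        Real.exp (f (gridPoint a b n (k + 1)) - f (gridPoint a b n k)) := by
    intro k hk
    have hkn : k + 1 ≤ n := Finset.mem_range.1 hk
    refine truncExp_of_abs_le_one
      (hfδ _ (gridPoint_mem_Icc hab hkn) _ (gridPoint_mem_Icc hab (k.le_succ.trans hkn)) ?_).le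
    rwa [Real.dist_eq, gridPoint_succ_sub, abs_of_nonneg (by have := sub_nonneg.2 hab; positivity)]
  rw [Finset.prod_congr rfl hstep, ← Real.exp_sum,
    Finset.sum_range_sub fun k => f (gridPoint a b n k), gridPoint_self a b hn,
    gridPoint_zero_right]

end Grid

section ConditionalVariance

variable {Ω : Type*} {m m0 : MeasurableSpace Ω} {μ : Measure Ω} [IsFiniteMeasure μ]

lemma condExp_truncExp_sub_condExp_le (hm : m ≤ m0) {X : Ω → ℝ} (hX : MemLp X 2 μ) :
    μ[fun ω => truncExp (X ω - μ[X | m] ω) | m] ≤ᵐ[μ] 1 + Var[X; μ | m] := by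
  set D : Ω → ℝ := X - μ[X | m]
  have hD : MemLp D 2 μ := hX.sub (hX.condExp one_le_two)
  have hD1 : Integrable D μ := hD.integrable one_le_two
  have hD2 : Integrable (D ^ 2) μ := hD.integrable_sq
  have hone : Integrable (1 : Ω → ℝ) μ := integrable_const 1
  have htrunc : Integrable (fun ω => truncExp (D ω)) μ := by
    refine .of_bound (measurable_truncExp.comp_aemeasurable hD1.aemeasurable).aestronglyMeasurable
      (Real.exp 1) (ae_of_all _ fun ω => ?_)
    rw [Real.norm_of_nonneg (truncExp_nonneg _)]
    exact truncExp_le_exp_one _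
  have hcentered : μ[D | m] =ᵐ[μ] 0 := by
    filter_upwards [condExp_sub (hX.integrable one_le_two) (integrable_condExp (m := m) (f := X)) m,
      condExp_condExp_of_le (f := X) le_rfl hm] with ω h1 h2
    simp [D, h1, h2]
  have hquad : μ[1 + D + D ^ 2 | m] =ᵐ[μ] 1 + Var[X; μ | m] := by
    filter_upwards [condExp_add (hone.add hD1) hD2 m, condExp_add hone hD1 m,
      hcentered] with ω h1 h2 h3
    have h4 : μ[(1 : Ω → ℝ) | m] = 1 := condExp_const hm 1
    rw [h1, Pi.add_apply, h2, Pi.add_apply, h3, h4, Pi.zero_apply, add_zero]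
    rfl
  refine (condExp_mono htrunc ((hone.add hD1).add hD2)
    (ae_of_all _ fun ω => ?_)).trans hquad.le
  exact truncExp_le_one_add_add_sq (D ω)

lemma integral_mul_le_of_condExp_le (hm : m ≤ m0) {Y g : Ω → ℝ} {C c : ℝ}
    (hY : StronglyMeasurable[m] Y) (hY0 : ∀ ω, 0 ≤ Y ω) (hYC : ∀ ω, Y ω ≤ C)
    (hg : Integrable g μ) (hgc : μ[g | m] ≤ᵐ[μ] fun _ => c) :
    ∫ ω, Y ω * g ω ∂μ ≤ c * ∫ ω, Y ω ∂μ := by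
  have hbound : ∀ᵐ ω ∂μ, ‖Y ω‖ ≤ C :=
    ae_of_all _ fun ω => (Real.norm_of_nonneg (hY0 ω)).trans_le (hYC ω)
  have hYm : AEStronglyMeasurable Y μ := (hY.mono hm).aestronglyMeasurable
  calc ∫ ω, Y ω * g ω ∂μ = ∫ ω, Y ω * μ[g | m] ω ∂μ := by
        rw [← integral_condExp hm]
        exact integral_congr_ae (condExp_stronglyMeasurable_mul_of_bound hm hY hg C hbound)
    _ ≤ ∫ ω, Y ω * c ∂μ := by
        refine integral_mono_ae (integrable_condExp.bdd_mul hYm hbound)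
          ((integrable_const c).bdd_mul hYm hbound) ?_
        filter_upwards [hgc] with ω hω
        exact mul_le_mul_of_nonneg_left hω (hY0 ω)
    _ = c * ∫ ω, Y ω ∂μ := by rw [integral_mul_const, mul_comm]

lemma integral_prod_le_of_condExp_le {ι : Type*} [Preorder ι] {ℱ : Filtration ι m0} {τ : ℕ → ι}
    (hτ : Monotone τ) {ψ : ℕ → Ω → ℝ} {C c : ℝ} {n : ℕ}
    (hψ : ∀ k, StronglyMeasurable[ℱ (τ (k + 1))] (ψ k)) (hψ0 : ∀ k ω, 0 ≤ ψ k ω)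
    (hψC : ∀ k ω, ψ k ω ≤ C) (hc : 0 ≤ c)
    (hψc : ∀ k < n, μ[ψ k | ℱ (τ k)] ≤ᵐ[μ] fun _ => c) :
    ∫ ω, ∏ k ∈ Finset.range n, ψ k ω ∂μ ≤ c ^ n * μ.real univ := by
  induction n with
  | zero => simp
  | succ n ih =>
    have hprod : StronglyMeasurable[ℱ (τ n)] fun ω => ∏ k ∈ Finset.range n, ψ k ω :=
      Finset.stronglyMeasurable_fun_prod _ fun k hk =>
        (hψ k).mono (ℱ.mono (hτ (Finset.mem_range.1 hk)))
    have hprodC : ∀ ω, ∏ k ∈ Finset.range n, ψ k ω ≤ C ^ n := fun ω =>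
      (Finset.prod_le_prod (fun k _ => hψ0 k ω) fun k _ => hψC k ω).trans_eq (by simp)
    have hint : Integrable (ψ n) μ :=
      .of_bound ((hψ n).mono (ℱ.le _)).aestronglyMeasurable C
        (ae_of_all _ fun ω => (Real.norm_of_nonneg (hψ0 n ω)).trans_le (hψC n ω))
    simp_rw [Finset.prod_range_succ]
    calc ∫ ω, (∏ k ∈ Finset.range n, ψ k ω) * ψ n ω ∂μ
        ≤ c * ∫ ω, ∏ k ∈ Finset.range n, ψ k ω ∂μ :=
          integral_mul_le_of_condExp_le (ℱ.le _) hprod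
            (fun ω => Finset.prod_nonneg fun k _ => hψ0 k ω) hprodC hint (hψc n n.lt_succ_self)
      _ ≤ c * (c ^ n * μ.real univ) := by
          gcongr
          exact ih fun k hk => hψc k (hk.trans n.lt_succ_self)
      _ = c ^ (n + 1) * μ.real univ := by rw [pow_succ', mul_assoc]

end ConditionalVariance

section Martingale

variable {Ω : Type*} {m0 : MeasurableSpace Ω} {μ : Measure Ω} {ℱ : Filtration ℝ m0}
  {Z I : ℝ → Ω → ℝ}

lemma memLp_two_of_martingale_sq_sub [IsFiniteMeasure μ] {s c : ℝ} (hZ : Martingale Z ℱ μ)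
    (hM : Martingale (fun r ω => Z r ω ^ 2 - I r ω) ℱ μ) (hI : ∀ᵐ ω ∂μ, I s ω ≤ c) :
    MemLp (Z s) 2 μ := by
  have hZs : AEStronglyMeasurable (Z s) μ := (hZ.integrable s).aestronglyMeasurable
  refine (memLp_two_iff_integrable_sq hZs).2
    (((hM.integrable s).add (integrable_const c)).mono' (hZs.pow 2) ?_)
  filter_upwards [hI] with ω hω
  rw [Real.norm_of_nonneg (sq_nonneg _), Pi.add_apply]
  linarith

lemma condVar_le_of_martingale_sq_sub [IsFiniteMeasure μ] {u s c : ℝ} (hus : u ≤ s)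
    (hZ : Martingale Z ℱ μ) (hM : Martingale (fun r ω => Z r ω ^ 2 - I r ω) ℱ μ)
    (hZu : MemLp (Z u) 2 μ) (hZs : MemLp (Z s) 2 μ) (hI : ∀ᵐ ω ∂μ, I s ω - I u ω ≤ c) :
    Var[Z s; μ | ℱ u] ≤ᵐ[μ] fun _ => c := by
  set M : ℝ → Ω → ℝ := fun r ω => Z r ω ^ 2 - I r ω
  have hZs2 : Integrable (Z s ^ 2) μ := hZs.integrable_sq
  have hsq : Integrable (Z u ^ 2 + fun _ => c) μ := hZu.integrable_sq.add (integrable_const c)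
  have hle : Z s ^ 2 ≤ᵐ[μ] M s - M u + (Z u ^ 2 + fun _ => c) := by
    filter_upwards [hI] with ω hω
    simp only [M, Pi.add_apply, Pi.sub_apply, Pi.pow_apply]
    linarith
  have hmeas : StronglyMeasurable[ℱ u] (Z u ^ 2 + fun _ => c) :=
    ((hZ.stronglyMeasurable u).pow 2).add stronglyMeasurable_const
  filter_upwards [condVar_ae_eq_condExp_sq_sub_sq_condExp (ℱ.le u) hZs, hZ.condExp_ae_eq hus,
    condExp_mono (m := ℱ u) hZs2
      (((hM.integrable s).sub (hM.integrable u)).add hsq) hle,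
    condExp_add ((hM.integrable s).sub (hM.integrable u)) hsq (ℱ u),
    condExp_sub (hM.integrable s) (hM.integrable u) (ℱ u), hM.condExp_ae_eq hus,
    hM.condExp_ae_eq (le_refl u)] with ω hvar hZω hmono hadd hsub hMs hMu
  rw [condExp_of_stronglyMeasurable (ℱ.le u) hmeas hsq] at hadd
  simp only [Pi.sub_apply, Pi.add_apply, Pi.pow_apply] at hvar hadd hsub
  rw [hsub, hMs, hMu] at hadd
  rw [hvar, hZω]
  linarith [hmono.trans_eq hadd]

variable [IsProbabilityMeasure μ] {a b v : ℝ}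

lemma condExp_truncExp_sub_le {u s : ℝ} (hus : u ≤ s) (hZ : Martingale Z ℱ μ)
    (hZs : MemLp (Z s) 2 μ) (hvar : Var[Z s; μ | ℱ u] ≤ᵐ[μ] fun _ => v) :
    μ[fun ω => truncExp (Z s ω - Z u ω) | ℱ u] ≤ᵐ[μ] fun _ => 1 + v := by
  have hcongr : (fun ω => truncExp (Z s ω - Z u ω)) =ᵐ[μ]
      fun ω => truncExp (Z s ω - μ[Z s | ℱ u] ω) := by
    filter_upwards [hZ.condExp_ae_eq hus] with ω hω
    rw [hω]
  filter_upwards [condExp_congr_ae (m := ℱ u) hcongr,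
    condExp_truncExp_sub_condExp_le (ℱ.le u) hZs, hvar] with ω h1 h2 h3
  rw [h1]
  exact h2.trans (add_le_add_right h3 1)

lemma integral_prod_truncExp_le (hZ : Martingale Z ℱ μ) (hab : a ≤ b) (hv : 0 ≤ v)
    (hZ2 : ∀ r ∈ Icc a b, MemLp (Z r) 2 μ)
    (hvar : ∀ u s, a ≤ u → u ≤ s → s ≤ b → Var[Z s; μ | ℱ u] ≤ᵐ[μ] fun _ => v * (s - u))
    {n : ℕ} (hn : n ≠ 0) :
    ∫ ω, ∏ k ∈ Finset.range n,
        truncExp (Z (gridPoint a b n (k + 1)) ω - Z (gridPoint a b n k) ω) ∂μ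
      ≤ Real.exp (v * (b - a)) := by
  have := sub_nonneg.2 hab
  have hmono := monotone_gridPoint hab n
  calc ∫ ω, ∏ k ∈ Finset.range n,
        truncExp (Z (gridPoint a b n (k + 1)) ω - Z (gridPoint a b n k) ω) ∂μ
      ≤ (1 + v * ((b - a) / n)) ^ n * μ.real univ := by
        refine integral_prod_le_of_condExp_le (ℱ := ℱ) hmono (fun k => ?_)
          (fun _ _ => truncExp_nonneg _) (fun _ _ => truncExp_le_exp_one _) (by positivity)
          fun k hk => ?_
        · exact (measurable_truncExp.comp ((hZ.stronglyMeasurable _).measurable.sub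
            ((hZ.stronglyMeasurable _).mono (ℱ.mono (hmono k.le_succ))).measurable)
            ).stronglyMeasurable
        · have hk0 := gridPoint_mem_Icc hab hk.le
          have hk1 := gridPoint_mem_Icc hab hk
          rw [← gridPoint_succ_sub a b n k]
          exact condExp_truncExp_sub_le (hmono k.le_succ) hZ (hZ2 _ hk1)
            (hvar _ _ hk0.1 (hmono k.le_succ) hk1.2)
    _ ≤ Real.exp (v * ((b - a) / n)) ^ n := by
        rw [probReal_univ, mul_one, add_comm]
        gcongr
        exact Real.add_one_le_exp _
    _ = Real.exp (v * (b - a)) := by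
        rw [← Real.exp_nat_mul]
        congr 1
        field_simp

-- The cut-off products equal `exp (Z b - Z a)` on fine grids by continuity, and Fatou's lemma
-- replaces a domination that is not available.
lemma lintegral_exp_sub_le_of_condVar_le (hZ : Martingale Z ℱ μ) (hab : a ≤ b) (hv : 0 ≤ v)
    (hZc : ∀ ω, ContinuousOn (fun r => Z r ω) (Icc a b))
    (hZ2 : ∀ r ∈ Icc a b, MemLp (Z r) 2 μ)
    (hvar : ∀ u s, a ≤ u → u ≤ s → s ≤ b → Var[Z s; μ | ℱ u] ≤ᵐ[μ] fun _ => v * (s - u)) :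
    ∫⁻ ω, ENNReal.ofReal (Real.exp (Z b ω - Z a ω)) ∂μ
      ≤ ENNReal.ofReal (Real.exp (v * (b - a))) := by
  set P : ℕ → Ω → ℝ := fun n ω => ∏ k ∈ Finset.range n,
    truncExp (Z (gridPoint a b n (k + 1)) ω - Z (gridPoint a b n k) ω)
  have hP : ∀ n, Measurable (P n) := fun n => Finset.measurable_fun_prod _ fun k _ =>
    measurable_truncExp.comp (((hZ.stronglyMeasurable _).mono (ℱ.le _)).measurable.sub
      ((hZ.stronglyMeasurable _).mono (ℱ.le _)).measurable)
  have hP0 : ∀ n ω, 0 ≤ P n ω := fun n ω => Finset.prod_nonneg fun _ _ => truncExp_nonneg _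
  have hPC : ∀ n ω, P n ω ≤ Real.exp 1 ^ n := fun n ω =>
    (Finset.prod_le_prod (fun _ _ => truncExp_nonneg _) fun _ _ => truncExp_le_exp_one _).trans_eq
      (by simp)
  have hPint : ∀ n, Integrable (P n) μ := fun n =>
    .of_bound (hP n).aestronglyMeasurable (Real.exp 1 ^ n)
      (ae_of_all _ fun ω => (Real.norm_of_nonneg (hP0 n ω)).trans_le (hPC n ω))
  have hbound : ∀ᶠ n in atTop, ∫⁻ ω, ENNReal.ofReal (P n ω) ∂μ
      ≤ ENNReal.ofReal (Real.exp (v * (b - a))) := by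
    filter_upwards [eventually_ne_atTop 0] with n hn
    rw [← ofReal_integral_eq_lintegral_ofReal (hPint n) (ae_of_all _ (hP0 n))]
    exact ENNReal.ofReal_le_ofReal (integral_prod_truncExp_le hZ hab hv hZ2 hvar hn)
  calc ∫⁻ ω, ENNReal.ofReal (Real.exp (Z b ω - Z a ω)) ∂μ
      = ∫⁻ ω, liminf (fun n => ENNReal.ofReal (P n ω)) atTop ∂μ := by
        refine lintegral_congr fun ω => (Tendsto.liminf_eq ?_).symm
        exact tendsto_nhds_of_eventually_eq
          ((eventually_prod_truncExp_eq hab (hZc ω)).mono fun n hn => congrArg _ hn)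
    _ ≤ liminf (fun n => ∫⁻ ω, ENNReal.ofReal (P n ω) ∂μ) atTop :=
        lintegral_liminf_le fun n => (hP n).ennreal_ofReal
    _ ≤ ENNReal.ofReal (Real.exp (v * (b - a))) := liminf_le_of_frequently_le' hbound.frequently

theorem hasSubgaussianMGF_sub_of_condVar_le (hZ : Martingale Z ℱ μ) (hab : a ≤ b) (hv : 0 ≤ v)
    (hZc : ∀ ω, ContinuousOn (fun r => Z r ω) (Icc a b))
    (hZ2 : ∀ r ∈ Icc a b, MemLp (Z r) 2 μ)
    (hvar : ∀ u s, a ≤ u → u ≤ s → s ≤ b → Var[Z s; μ | ℱ u] ≤ᵐ[μ] fun _ => v * (s - u)) :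
    HasSubgaussianMGF (fun ω => Z b ω - Z a ω) (2 * v * (b - a)).toNNReal μ := by
  have hc : 0 ≤ 2 * v * (b - a) := by have := sub_nonneg.2 hab; positivity
  have hmeas : ∀ l : ℝ, Measurable fun ω => Real.exp (l * (Z b ω - Z a ω)) := fun l =>
    Real.measurable_exp.comp ((((hZ.stronglyMeasurable b).mono (ℱ.le b)).measurable.sub
      ((hZ.stronglyMeasurable a).mono (ℱ.le a)).measurable).const_mul l)
  have hlaplace : ∀ l : ℝ, ∫⁻ ω, ENNReal.ofReal (Real.exp (l * (Z b ω - Z a ω))) ∂μ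
      ≤ ENNReal.ofReal (Real.exp ((2 * v * (b - a)).toNNReal * l ^ 2 / 2)) := by
    intro l
    have hscaled : ∀ u s, a ≤ u → u ≤ s → s ≤ b →
        Var[(l • Z) s; μ | ℱ u] ≤ᵐ[μ] fun _ => l ^ 2 * v * (s - u) := by
      intro u s hu hus hs
      filter_upwards [condVar_smul (m := ℱ u) (μ := μ) l (Z s), hvar u s hu hus hs] with ω h1 h2
      rw [Pi.smul_apply, h1, mul_assoc]
      exact mul_le_mul_of_nonneg_left h2 (sq_nonneg l)
    have := lintegral_exp_sub_le_of_condVar_le (hZ.smul l) hab (by positivity)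
      (fun ω => (hZc ω).const_smul l) (fun r hr => (hZ2 r hr).const_smul l) hscaled
    simp only [Pi.smul_apply, smul_eq_mul, ← mul_sub] at this
    refine this.trans_eq ?_
    rw [Real.coe_toNNReal _ hc]
    congr 2
    ring
  have hint : ∀ l : ℝ, Integrable (fun ω => Real.exp (l * (Z b ω - Z a ω))) μ := fun l =>
    (lintegral_ofReal_ne_top_iff_integrable (hmeas l).aestronglyMeasurable
      (ae_of_all _ fun ω => (Real.exp_pos _).le)).1
      (ne_top_of_le_ne_top ENNReal.ofReal_ne_top (hlaplace l))
  refine ⟨hint, fun l => (ENNReal.ofReal_le_ofReal_iff (Real.exp_pos _).le).1 ?_⟩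
  rw [mgf, ofReal_integral_eq_lintegral_ofReal (hint l) (ae_of_all _ fun ω => (Real.exp_pos _).le)]
  exact hlaplace l

end Martingale

section SquareExponential

lemma lintegral_exp_mul_sq_gaussianReal {v : ℝ≥0} {c : ℝ} (hcv : c * v < 1) :
    ∫⁻ x, ENNReal.ofReal (Real.exp (c * x ^ 2 / 2)) ∂gaussianReal 0 v
      = ENNReal.ofReal (√(1 - c * v))⁻¹ := by
  rcases eq_or_ne v 0 with rfl | hv
  · simp
  have hv0 : (0 : ℝ) < v := NNReal.coe_pos.2 (pos_iff_ne_zero.2 hv)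
  have hd : 0 < 1 - c * v := sub_pos.2 hcv
  obtain ⟨w, hw⟩ : ∃ w : ℝ≥0, (w : ℝ) = v / (1 - c * v) := ⟨⟨_, (div_pos hv0 hd).le⟩, rfl⟩
  have hw0 : (0 : ℝ) < w := hw ▸ div_pos hv0 hd
  have htilt : ∀ x, gaussianPDFReal 0 v x * Real.exp (c * x ^ 2 / 2)
      = (√(1 - c * v))⁻¹ * gaussianPDFReal 0 w x := by
    intro x
    have hsqrt : √(2 * Real.pi * v) = √(1 - c * v) * √(2 * Real.pi * w) := by
      rw [← Real.sqrt_mul hd.le, hw, mul_left_comm, mul_div_cancel₀ _ hd.ne']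
    simp only [gaussianPDFReal, sub_zero]
    rw [hsqrt, mul_inv, mul_assoc, mul_assoc, ← Real.exp_add]
    congr 3
    rw [hw]
    field_simp
    ring
  rw [gaussianReal_of_var_ne_zero 0 hv,
    lintegral_withDensity_eq_lintegral_mul _ (measurable_gaussianPDF 0 v) (by fun_prop)]
  simp only [Pi.mul_apply, gaussianPDF, ← ENNReal.ofReal_mul (gaussianPDFReal_nonneg _ _ _), htilt]
  simp_rw [ENNReal.ofReal_mul (inv_nonneg.2 (Real.sqrt_nonneg (1 - c * v)))]
  rw [lintegral_const_mul _ (by fun_prop),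
    lintegral_gaussianPDFReal_eq_one 0 (by exact_mod_cast hw0.ne'), mul_one]

lemma lintegral_exp_mul_gaussianReal (v : ℝ≥0) (x : ℝ) :
    ∫⁻ g, ENNReal.ofReal (Real.exp (x * g)) ∂gaussianReal 0 v
      = ENNReal.ofReal (Real.exp (v * x ^ 2 / 2)) := by
  rw [← ofReal_integral_eq_lintegral_ofReal (integrable_exp_mul_gaussianReal x)
    (ae_of_all _ fun _ => (Real.exp_pos _).le)]
  have := congrFun (mgf_fun_id_gaussianReal (μ := 0) (v := v)) x
  rw [zero_mul, zero_add] at this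
  rw [← this, mgf]

-- Writing `exp (v * X ^ 2 / 2)` as a Gaussian average of `exp (g * X)` linearises the square.
theorem lintegral_exp_sq_le_of_hasSubgaussianMGF {Ω : Type*} {m0 : MeasurableSpace Ω}
    {μ : Measure Ω} [SFinite μ] {X : Ω → ℝ} {c v : ℝ≥0} (hX : HasSubgaussianMGF X c μ)
    (hcv : c * v < 1) :
    ∫⁻ ω, ENNReal.ofReal (Real.exp (v * X ω ^ 2 / 2)) ∂μ
      ≤ ENNReal.ofReal (√(1 - c * v))⁻¹ := by
  have hXm : AEMeasurable X μ := hX.aemeasurable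
  calc ∫⁻ ω, ENNReal.ofReal (Real.exp (v * X ω ^ 2 / 2)) ∂μ
      = ∫⁻ ω, ∫⁻ g, ENNReal.ofReal (Real.exp (X ω * g)) ∂gaussianReal 0 v ∂μ := by
        simp_rw [lintegral_exp_mul_gaussianReal]
    _ = ∫⁻ g, ∫⁻ ω, ENNReal.ofReal (Real.exp (X ω * g)) ∂μ ∂gaussianReal 0 v :=
        lintegral_lintegral_swap (Real.measurable_exp.comp_aemeasurable
          (hXm.comp_fst.mul measurable_snd.aemeasurable)).ennreal_ofReal
    _ ≤ ∫⁻ g, ENNReal.ofReal (Real.exp (c * g ^ 2 / 2)) ∂gaussianReal 0 v := by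
        refine lintegral_mono fun g => ?_
        simp_rw [mul_comm _ g]
        rw [← ofReal_integral_eq_lintegral_ofReal (hX.integrable_exp_mul g)
          (ae_of_all _ fun _ => (Real.exp_pos _).le)]
        exact ENNReal.ofReal_le_ofReal (hX.mgf_le g)
    _ = ENNReal.ofReal (√(1 - c * v))⁻¹ :=
        lintegral_exp_mul_sq_gaussianReal (by exact_mod_cast hcv)

end SquareExponential

section DyadicChaining

section UnitInterval

variable {E : Type*} [PseudoMetricSpace E] {f : ℝ → E} {x y r κ M : ℝ} {n : ℕ}

lemma dist_le_of_dist_succ_le {u : ℕ → E} {N j k : ℕ} {C : ℝ} (hC : 0 ≤ C)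
    (hu : ∀ i < N, dist (u (i + 1)) (u i) ≤ C) (hjk : j ≤ k) (hkj : k ≤ j + 1) (hkN : k ≤ N) :
    dist (u k) (u j) ≤ C := by
  rcases hkj.eq_or_lt with rfl | hlt
  · exact hu j hkN
  · rwa [le_antisymm (Nat.le_of_lt_succ hlt) hjk, dist_self]

lemma floor_mul_two_pow_le (hx : x ≤ 1) (n : ℕ) : ⌊x * 2 ^ n⌋₊ ≤ 2 ^ n :=
  Nat.floor_le_of_le (by push_cast; exact mul_le_of_le_one_left (by positivity) hx)

lemma floor_mul_two_pow_div_mem_Icc (hx : x ≤ 1) (n : ℕ) :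
    (⌊x * 2 ^ n⌋₊ : ℝ) / 2 ^ n ∈ Icc 0 1 :=
  ⟨by positivity, div_le_one_of_le₀ (by exact_mod_cast floor_mul_two_pow_le hx n) (by positivity)⟩

lemma dist_floor_mul_two_pow_le (hf : ContinuousOn f (Icc 0 1)) (hr0 : 0 ≤ r) (hr1 : r < 1)
    (hfM : ∀ n k : ℕ, k < 2 ^ n → dist (f ((k + 1 : ℕ) / 2 ^ n)) (f (k / 2 ^ n)) ≤ M * r ^ n)
    (hx : x ∈ Icc 0 1) (n : ℕ) :
    dist (f (⌊x * 2 ^ n⌋₊ / 2 ^ n)) (f x) ≤ M * r ^ n / (1 - r) := by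
  have hM : 0 ≤ M := by simpa using dist_nonneg.trans (hfM 0 0 (by simp))
  have hstep : ∀ n : ℕ, dist (f (⌊x * 2 ^ n⌋₊ / 2 ^ n)) (f (⌊x * 2 ^ (n + 1)⌋₊ / 2 ^ (n + 1)))
      ≤ M * r ^ n := by
    intro n
    have hhalf : ⌊x * 2 ^ n⌋₊ = ⌊x * 2 ^ (n + 1)⌋₊ / 2 := by
      rw [← Nat.floor_div_ofNat, pow_succ, ← mul_assoc, mul_div_cancel_right₀ _ two_ne_zero]
    have hcoarse : (⌊x * 2 ^ n⌋₊ : ℝ) / 2 ^ n = (2 * ⌊x * 2 ^ n⌋₊ : ℕ) / 2 ^ (n + 1) := by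
      push_cast
      rw [pow_succ', mul_div_mul_left _ _ two_ne_zero]
    rw [hcoarse, dist_comm]
    refine (dist_le_of_dist_succ_le (u := fun k : ℕ => f (k / 2 ^ (n + 1))) (by positivity)
      (hfM (n + 1)) (by lia) (by lia) (floor_mul_two_pow_le hx.2 _)).trans ?_
    exact mul_le_mul_of_nonneg_left (pow_le_pow_of_le_one hr0 hr1.le n.le_succ) hM
  have hlim : Tendsto (fun n : ℕ => (⌊x * 2 ^ n⌋₊ : ℝ) / 2 ^ n) atTop (𝓝[Icc 0 1] x) :=
    tendsto_nhdsWithin_iff.2 ⟨(tendsto_nat_floor_mul_div_atTop hx.1).comp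
      (tendsto_pow_atTop_atTop_of_one_lt one_lt_two),
      .of_forall (floor_mul_two_pow_div_mem_Icc hx.2)⟩
  exact dist_le_of_le_geometric_of_tendsto r M hr1 hstep ((hf x hx).tendsto.comp hlim) n

lemma dist_le_of_sub_le_half_pow (hf : ContinuousOn f (Icc 0 1)) (hr0 : 0 ≤ r) (hr1 : r < 1)
    (hfM : ∀ n k : ℕ, k < 2 ^ n → dist (f ((k + 1 : ℕ) / 2 ^ n)) (f (k / 2 ^ n)) ≤ M * r ^ n)
    (hx : x ∈ Icc 0 1) (hy : y ∈ Icc 0 1) (hxy : x ≤ y) (hyx : y - x ≤ (1 / 2) ^ n) :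
    dist (f y) (f x) ≤ (1 + 2 / (1 - r)) * (M * r ^ n) := by
  have hM : 0 ≤ M := by simpa using dist_nonneg.trans (hfM 0 0 (by simp))
  have hfloor : ⌊y * 2 ^ n⌋₊ ≤ ⌊x * 2 ^ n⌋₊ + 1 := by
    have hx0 := hx.1
    rw [← Nat.floor_add_one (by positivity)]
    refine Nat.floor_le_floor ?_
    rw [one_div, inv_pow, ← one_div, le_div_iff₀ (by positivity)] at hyx
    linarith
  have hgrid : dist (f (⌊y * 2 ^ n⌋₊ / 2 ^ n)) (f (⌊x * 2 ^ n⌋₊ / 2 ^ n)) ≤ M * r ^ n :=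
    dist_le_of_dist_succ_le (u := fun k : ℕ => f (k / 2 ^ n)) (by positivity) (hfM n)
      (by gcongr) hfloor (floor_mul_two_pow_le hy.2 n)
  have hxfloor := dist_floor_mul_two_pow_le hf hr0 hr1 hfM hx n
  have hyfloor := dist_floor_mul_two_pow_le hf hr0 hr1 hfM hy n
  rw [dist_comm] at hyfloor
  calc dist (f y) (f x)
      ≤ M * r ^ n / (1 - r) + M * r ^ n + M * r ^ n / (1 - r) :=
        (dist_triangle4 _ _ _ _).trans (add_le_add (add_le_add hyfloor hgrid) hxfloor)
    _ = (1 + 2 / (1 - r)) * (M * r ^ n) := by ring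

/-- The constant of the dyadic chaining argument: a continuous function on an interval whose
increments over dyadic subintervals of length `δ` are at most `M * δ ^ κ` is `κ`-Hölder with
constant `dyadicHolderConst κ * M`. The factor `2 ^ κ` rounds a distance to a power of two and the
geometric series in `2 ^ (-κ)` approximates both endpoints along the dyadic grids. -/
noncomputable def dyadicHolderConst (κ : ℝ) : ℝ := 2 ^ κ * (1 + 2 / (1 - 2 ^ (-κ)))

lemma two_rpow_neg_lt_one (hκ : 0 < κ) : (2 : ℝ) ^ (-κ) < 1 :=
  Real.rpow_lt_one_of_one_lt_of_neg one_lt_two (neg_lt_zero.2 hκ)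

lemma dyadicHolderConst_pos (hκ : 0 < κ) : 0 < dyadicHolderConst κ := by
  have := sub_pos.2 (two_rpow_neg_lt_one hκ)
  unfold dyadicHolderConst
  positivity

lemma dist_le_dyadicHolderConst_mul (hκ : 0 < κ) (hf : ContinuousOn f (Icc 0 1))
    (hfM : ∀ n k : ℕ, k < 2 ^ n →
      dist (f ((k + 1 : ℕ) / 2 ^ n)) (f (k / 2 ^ n)) ≤ M * ((1 / 2) ^ n) ^ κ)
    (hx : x ∈ Icc 0 1) (hy : y ∈ Icc 0 1) (hxy : x < y) :
    dist (f y) (f x) ≤ dyadicHolderConst κ * M * (y - x) ^ κ := by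
  have hM : 0 ≤ M := by simpa using dist_nonneg.trans (hfM 0 0 (by simp))
  have hscale : ∀ n : ℕ, (((1 : ℝ) / 2) ^ n) ^ κ = (2 ^ (-κ)) ^ n := by
    intro n
    rw [← Real.rpow_natCast_mul (by norm_num), ← Real.rpow_mul_natCast zero_le_two, one_div,
      Real.inv_rpow zero_le_two, ← Real.rpow_neg zero_le_two, neg_mul, mul_comm]
  simp_rw [hscale] at hfM
  have := sub_pos.2 (two_rpow_neg_lt_one hκ)
  obtain ⟨n, hn, hn'⟩ := exists_nat_pow_near_of_lt_one (sub_pos.2 hxy) (by linarith [hx.1, hy.2])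
    (by norm_num : (0 : ℝ) < 1 / 2) (by norm_num)
  calc dist (f y) (f x)
      ≤ (1 + 2 / (1 - 2 ^ (-κ))) * (M * (2 ^ (-κ)) ^ n) :=
        dist_le_of_sub_le_half_pow hf (by positivity) (two_rpow_neg_lt_one hκ) hfM hx hy
          hxy.le hn'
    _ = dyadicHolderConst κ * M * ((1 / 2) ^ (n + 1)) ^ κ := by
        rw [hscale, dyadicHolderConst, pow_succ, Real.rpow_neg zero_le_two]
        field_simp
    _ ≤ dyadicHolderConst κ * M * (y - x) ^ κ := by
        have := (dyadicHolderConst_pos hκ).le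
        gcongr

end UnitInterval

variable {E : Type*} [NormedAddCommGroup E] {a b κ M : ℝ} {f : ℝ → E}

lemma holderSemi_nonneg (f : ℝ → E) (a b κ : ℝ) : 0 ≤ holderSemi f a b κ :=
  Real.iSup_nonneg fun p =>
    div_nonneg (norm_nonneg _) (Real.rpow_nonneg (sub_nonneg.2 p.2.2.1.le) _)

theorem holderSemi_le_dyadicHolderConst_mul (hκ : 0 < κ) (hab : a < b)
    (hf : ContinuousOn f (Icc a b))
    (hfM : ∀ n k : ℕ, k < 2 ^ n →
      ‖f (gridPoint a b (2 ^ n) (k + 1)) - f (gridPoint a b (2 ^ n) k)‖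
        ≤ M * ((b - a) / 2 ^ n) ^ κ) :
    holderSemi f a b κ ≤ dyadicHolderConst κ * M := by
  have hba : 0 < b - a := sub_pos.2 hab
  have hM : 0 ≤ M := nonneg_of_mul_nonneg_left ((norm_nonneg _).trans (hfM 0 0 (by simp)))
    (by positivity)
  set g : ℝ → E := fun x => f (a + x * (b - a))
  have hg : ContinuousOn g (Icc 0 1) := by
    refine hf.comp (by fun_prop) fun x hx => ⟨?_, ?_⟩ <;> nlinarith [hx.1, hx.2]
  have hgM : ∀ n k : ℕ, k < 2 ^ n → dist (g ((k + 1 : ℕ) / 2 ^ n)) (g (k / 2 ^ n))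
      ≤ M * (b - a) ^ κ * ((1 / 2) ^ n) ^ κ := by
    intro n k hk
    have hgrid : ∀ j : ℕ, g (j / 2 ^ n) = f (gridPoint a b (2 ^ n) j) := by
      intro j
      simp only [g, gridPoint]
      push_cast
      congr 2
      ring
    rw [hgrid, hgrid, dist_eq_norm, mul_assoc, ← Real.mul_rpow hba.le (by positivity), one_div,
      inv_pow, ← div_eq_mul_inv]
    exact hfM n k hk
  refine Real.iSup_le ?_ (mul_nonneg (dyadicHolderConst_pos hκ).le hM)
  rintro ⟨⟨u, s⟩, hu, hus, hs⟩
  have hunit : ∀ r ∈ Icc a b, (r - a) / (b - a) ∈ Icc 0 1 := fun r hr =>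
    ⟨div_nonneg (sub_nonneg.2 hr.1) hba.le, (div_le_one hba).2 (by linarith [hr.2])⟩
  have := dist_le_dyadicHolderConst_mul hκ hg hgM (hunit u ⟨hu, hus.le.trans hs⟩)
    (hunit s ⟨hu.trans hus.le, hs⟩) (by gcongr)
  simp only [g, div_mul_cancel₀ _ hba.ne', add_sub_cancel, ← sub_div, sub_sub_sub_cancel_right,
    Real.div_rpow (sub_nonneg.2 hus.le) hba.le, dist_eq_norm] at this
  rw [div_le_iff₀ (Real.rpow_pos_of_pos (sub_pos.2 hus) κ)]
  refine this.trans_eq ?_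
  field_simp

end DyadicChaining

section DyadicEnergy

variable {E : Type*} [NormedAddCommGroup E] {f : ℝ → E} {a b c κ : ℝ}

/-- A dyadic version of the Garsia–Rodemich–Rumsey energy: the sum of `exp (‖f s - f u‖ ^ 2 /
(c * (s - u)))` over all dyadic subintervals `[u, s]` of `[a, b]`, those of generation `n` having
weight `4⁻¹ ^ n`. It is `⊤` if the sum diverges. -/
noncomputable def dyadicEnergy (c : ℝ) (f : ℝ → E) (a b : ℝ) : ℝ≥0∞ :=
  ∑' n : ℕ, 4⁻¹ ^ n * ∑ k ∈ Finset.range (2 ^ n), ENNReal.ofReal (Real.exp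
    (‖f (gridPoint a b (2 ^ n) (k + 1)) - f (gridPoint a b (2 ^ n) k)‖ ^ 2 /
      (c * ((b - a) / 2 ^ n))))

lemma inv_four_pow_mul_le_dyadicEnergy (c : ℝ) (f : ℝ → E) (a b : ℝ) {n k : ℕ} (hk : k < 2 ^ n) :
    4⁻¹ ^ n * ENNReal.ofReal (Real.exp
      (‖f (gridPoint a b (2 ^ n) (k + 1)) - f (gridPoint a b (2 ^ n) k)‖ ^ 2 /
        (c * ((b - a) / 2 ^ n)))) ≤ dyadicEnergy c f a b := by
  refine le_trans ?_ (ENNReal.le_tsum n)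
  gcongr
  exact Finset.single_le_sum (f := fun k => ENNReal.ofReal (Real.exp
    (‖f (gridPoint a b (2 ^ n) (k + 1)) - f (gridPoint a b (2 ^ n) k)‖ ^ 2 /
      (c * ((b - a) / 2 ^ n))))) (fun _ _ => zero_le) (Finset.mem_range.2 hk)

lemma one_le_dyadicEnergy (hc : 0 ≤ c) (hab : a ≤ b) (f : ℝ → E) : 1 ≤ dyadicEnergy c f a b := by
  have := sub_nonneg.2 hab
  refine le_trans ?_ (inv_four_pow_mul_le_dyadicEnergy c f a b (n := 0) (k := 0) (by simp))
  rw [pow_zero, one_mul, ENNReal.one_le_ofReal]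
  exact Real.one_le_exp (by positivity)

lemma norm_sub_sq_le_of_dyadicEnergy_ne_top (hc : 0 < c) (hab : a < b)
    (hf : dyadicEnergy c f a b ≠ ⊤) {n k : ℕ} (hk : k < 2 ^ n) :
    ‖f (gridPoint a b (2 ^ n) (k + 1)) - f (gridPoint a b (2 ^ n) k)‖ ^ 2
      ≤ c * ((b - a) / 2 ^ n) * (n * Real.log 4 + Real.log (dyadicEnergy c f a b).toReal) := by
  have := sub_pos.2 hab
  have hW : 0 < (dyadicEnergy c f a b).toReal :=
    ENNReal.toReal_pos (one_pos.trans_le (one_le_dyadicEnergy hc.le hab.le f)).ne' hf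
  have hterm := ENNReal.toReal_mono hf (inv_four_pow_mul_le_dyadicEnergy c f a b hk)
  rw [ENNReal.toReal_mul, ENNReal.toReal_ofReal (Real.exp_pos _).le, ENNReal.toReal_pow,
    ENNReal.toReal_inv, ENNReal.toReal_ofNat, inv_pow, inv_mul_le_iff₀ (by positivity)] at hterm
  rw [← div_le_iff₀' (by positivity), ← Real.log_pow, ← Real.log_mul (by positivity) hW.ne']
  exact (Real.le_log_iff_exp_le (by positivity)).2 hterm

lemma natCast_mul_log_four_mul_half_pow_rpow_le {θ : ℝ} (hθ : 0 < θ) (n : ℕ) :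
    n * Real.log 4 * ((1 / 2) ^ n) ^ θ ≤ 2 / θ := by
  have hlog : Real.log 4 = 2 * Real.log 2 := by
    rw [← Real.log_rpow two_pos]
    norm_num
  have hpow : (((1 : ℝ) / 2) ^ n) ^ θ = Real.exp (-(n * Real.log 2 * θ)) := by
    rw [Real.rpow_def_of_pos (by positivity), Real.log_pow, one_div, Real.log_inv]
    congr 1
    ring
  have hexp := (Real.mul_exp_neg_le_exp_neg_one (n * Real.log 2 * θ)).trans
    (Real.exp_le_one_iff.2 (by norm_num))
  rw [hlog, hpow, le_div_iff₀ hθ]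
  linarith

lemma log_toReal_dyadicEnergy_nonneg (hc : 0 ≤ c) (hab : a ≤ b) (f : ℝ → E) :
    0 ≤ Real.log (dyadicEnergy c f a b).toReal := by
  rcases eq_or_ne (dyadicEnergy c f a b) ⊤ with hW | hW
  · simp [hW]
  · exact Real.log_nonneg (by simpa using ENNReal.toReal_mono hW (one_le_dyadicEnergy hc hab f))

lemma norm_sub_le_sqrt_mul_rpow_of_dyadicEnergy_ne_top (hc : 0 < c) (hκ : κ < 1 / 2) (hab : a < b)
    (hW : dyadicEnergy c f a b ≠ ⊤) {n k : ℕ} (hk : k < 2 ^ n) :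
    ‖f (gridPoint a b (2 ^ n) (k + 1)) - f (gridPoint a b (2 ^ n) k)‖
      ≤ √(c * (b - a) ^ (1 - 2 * κ) *
          (2 / (1 - 2 * κ) + Real.log (dyadicEnergy c f a b).toReal)) * ((b - a) / 2 ^ n) ^ κ := by
  have hba : 0 < b - a := sub_pos.2 hab
  have hθ : 0 < 1 - 2 * κ := by linarith
  have hw := log_toReal_dyadicEnergy_nonneg hc.le hab.le f
  set w := Real.log (dyadicEnergy c f a b).toReal
  set δ := (b - a) / 2 ^ n with hδ
  have hδ0 : 0 < δ := by positivity
  have hδsplit : δ = (b - a) ^ (1 - 2 * κ) * ((1 / 2) ^ n) ^ (1 - 2 * κ) * (δ ^ κ) ^ 2 := by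
    rw [← Real.mul_rpow hba.le (by positivity), one_div, inv_pow, ← div_eq_mul_inv, ← hδ,
      ← Real.rpow_mul_natCast hδ0.le, ← Real.rpow_add hδ0]
    norm_num [mul_comm]
  have hpow : (((1 : ℝ) / 2) ^ n) ^ (1 - 2 * κ) ≤ 1 :=
    Real.rpow_le_one (by positivity) (pow_le_one₀ (by norm_num) (by norm_num)) hθ.le
  have hlevel : ((1 / 2) ^ n) ^ (1 - 2 * κ) * (n * Real.log 4 + w) ≤ 2 / (1 - 2 * κ) + w := by
    linarith [natCast_mul_log_four_mul_half_pow_rpow_le hθ n, mul_le_of_le_one_left hw hpow]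
  refine (sq_le_sq₀ (norm_nonneg _) (by positivity)).1 ?_
  calc ‖f (gridPoint a b (2 ^ n) (k + 1)) - f (gridPoint a b (2 ^ n) k)‖ ^ 2
      ≤ c * δ * (n * Real.log 4 + w) := norm_sub_sq_le_of_dyadicEnergy_ne_top hc hab hW hk
    _ = c * (b - a) ^ (1 - 2 * κ) *
          (((1 / 2) ^ n) ^ (1 - 2 * κ) * (n * Real.log 4 + w)) * (δ ^ κ) ^ 2 := by
        nth_rewrite 1 [hδsplit]
        ring
    _ ≤ c * (b - a) ^ (1 - 2 * κ) * (2 / (1 - 2 * κ) + w) * (δ ^ κ) ^ 2 := by gcongr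
    _ = (√(c * (b - a) ^ (1 - 2 * κ) * (2 / (1 - 2 * κ) + w)) * δ ^ κ) ^ 2 := by
        rw [mul_pow, Real.sq_sqrt (by positivity)]

theorem holderSemi_sq_le_of_dyadicEnergy_ne_top (hc : 0 < c) (hκ0 : 0 < κ) (hκ : κ < 1 / 2)
    (hab : a < b) (hf : ContinuousOn f (Icc a b)) (hW : dyadicEnergy c f a b ≠ ⊤) :
    holderSemi f a b κ ^ 2 ≤ dyadicHolderConst κ ^ 2 * c * (b - a) ^ (1 - 2 * κ) *
      (2 / (1 - 2 * κ) + Real.log (dyadicEnergy c f a b).toReal) := by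
  have := sub_pos.2 hab
  have hθ : 0 < 1 - 2 * κ := by linarith
  have hw := log_toReal_dyadicEnergy_nonneg hc.le hab.le f
  have hsemi := holderSemi_le_dyadicHolderConst_mul hκ0 hab hf fun _ _ hk =>
    norm_sub_le_sqrt_mul_rpow_of_dyadicEnergy_ne_top hc hκ hab hW hk
  refine (pow_le_pow_left₀ (holderSemi_nonneg f a b κ) hsemi 2).trans_eq ?_
  rw [mul_pow, Real.sq_sqrt (by positivity)]
  ring

theorem ofReal_exp_holderSemi_sq_le_dyadicEnergy (hc : 0 < c) (hκ0 : 0 < κ) (hκ : κ < 1 / 2)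
    (hab : a < b) (hf : ContinuousOn f (Icc a b)) :
    ENNReal.ofReal (Real.exp (holderSemi f a b κ ^ 2 /
        (dyadicHolderConst κ ^ 2 * c * (b - a) ^ (1 - 2 * κ))))
      ≤ ENNReal.ofReal (Real.exp (2 / (1 - 2 * κ))) * dyadicEnergy c f a b := by
  rcases eq_or_ne (dyadicEnergy c f a b) ⊤ with hW | hW
  · rw [hW, ENNReal.mul_top (ENNReal.ofReal_pos.2 (Real.exp_pos _)).ne']
    exact le_top
  have := sub_pos.2 hab
  have hC := dyadicHolderConst_pos hκ0
  have hW0 : 0 < (dyadicEnergy c f a b).toReal :=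
    ENNReal.toReal_pos (one_pos.trans_le (one_le_dyadicEnergy hc.le hab.le f)).ne' hW
  rw [← ENNReal.ofReal_toReal hW, ← ENNReal.ofReal_mul (Real.exp_pos _).le]
  refine ENNReal.ofReal_le_ofReal ?_
  rw [← Real.exp_log hW0, ← Real.exp_add, Real.exp_le_exp, div_le_iff₀' (by positivity)]
  exact holderSemi_sq_le_of_dyadicEnergy_ne_top hc hκ0 hκ hab hf hW

lemma inv_four_pow_mul_two_pow (n : ℕ) : (4⁻¹ : ℝ≥0∞) ^ n * 2 ^ n = 2⁻¹ ^ n := by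
  have h4 : (4 : ℝ≥0∞) = 2 * 2 := by norm_num
  rw [← mul_pow, h4, ENNReal.mul_inv (by simp) (by simp), mul_assoc,
    ENNReal.inv_mul_cancel two_ne_zero ENNReal.ofNat_ne_top, mul_one]

lemma lintegral_dyadicEnergy_le {Ω : Type*} {m0 : MeasurableSpace Ω} {μ : Measure Ω}
    {X : ℝ → Ω → E} {B : ℝ≥0∞} (hab : a < b)
    (hX : ∀ s ∈ Icc a b, AEStronglyMeasurable (X s) μ)
    (hB : ∀ u s, a ≤ u → u < s → s ≤ b →
      ∫⁻ ω, ENNReal.ofReal (Real.exp (‖X s ω - X u ω‖ ^ 2 / (c * (s - u)))) ∂μ ≤ B) :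
    ∫⁻ ω, dyadicEnergy c (fun s => X s ω) a b ∂μ ≤ 2 * B := by
  have hmem : ∀ n k : ℕ, k ≤ 2 ^ n → gridPoint a b (2 ^ n) k ∈ Icc a b := fun n k hk =>
    gridPoint_mem_Icc hab.le hk
  have hmeas : ∀ n k : ℕ, k < 2 ^ n → AEMeasurable (fun ω => ENNReal.ofReal (Real.exp
      (‖X (gridPoint a b (2 ^ n) (k + 1)) ω - X (gridPoint a b (2 ^ n) k) ω‖ ^ 2 /
        (c * ((b - a) / 2 ^ n))))) μ := fun n k hk =>
    (Real.measurable_exp.comp_aemeasurable ((((hX _ (hmem n _ hk)).sub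
      (hX _ (hmem n k hk.le))).norm.aemeasurable.pow_const 2).div_const _)).ennreal_ofReal
  have hincr : ∀ n k : ℕ, k < 2 ^ n → ∫⁻ ω, ENNReal.ofReal (Real.exp
      (‖X (gridPoint a b (2 ^ n) (k + 1)) ω - X (gridPoint a b (2 ^ n) k) ω‖ ^ 2 /
        (c * ((b - a) / 2 ^ n)))) ∂μ ≤ B := by
    intro n k hk
    have hsub : gridPoint a b (2 ^ n) (k + 1) - gridPoint a b (2 ^ n) k = (b - a) / 2 ^ n := by
      exact_mod_cast gridPoint_succ_sub a b (2 ^ n) k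
    have hpos : 0 < (b - a) / 2 ^ n := div_pos (sub_pos.2 hab) (by positivity)
    rw [← hsub]
    exact hB _ _ (hmem n k hk.le).1 (sub_pos.1 (hsub ▸ hpos)) (hmem n _ hk).2
  unfold dyadicEnergy
  rw [lintegral_tsum fun n => (Finset.aemeasurable_fun_sum _ fun k hk =>
    hmeas n k (Finset.mem_range.1 hk)).const_mul _]
  calc ∑' n : ℕ, ∫⁻ ω, 4⁻¹ ^ n * ∑ k ∈ Finset.range (2 ^ n), ENNReal.ofReal (Real.exp
          (‖X (gridPoint a b (2 ^ n) (k + 1)) ω - X (gridPoint a b (2 ^ n) k) ω‖ ^ 2 /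
            (c * ((b - a) / 2 ^ n)))) ∂μ
      ≤ ∑' n : ℕ, 2⁻¹ ^ n * B := by
        gcongr with n
        rw [lintegral_const_mul' _ _ (by simp), lintegral_finsetSum' _ fun k hk =>
          hmeas n k (Finset.mem_range.1 hk), ← inv_four_pow_mul_two_pow, mul_assoc]
        gcongr
        refine (Finset.sum_le_card_nsmul _ _ _ fun k hk =>
          hincr n k (Finset.mem_range.1 hk)).trans_eq ?_
        rw [Finset.card_range, nsmul_eq_mul]
        push_cast
        rfl
    _ = 2 * B := by
        rw [ENNReal.tsum_mul_right, ENNReal.tsum_geometric, ENNReal.one_sub_inv_two, inv_inv]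

theorem lintegral_exp_sq_holderSemi_le {Ω : Type*} {m0 : MeasurableSpace Ω} {μ : Measure Ω}
    {X : ℝ → Ω → E} {B : ℝ≥0∞} (hc : 0 < c) (hκ0 : 0 < κ) (hκ : κ < 1 / 2) (hab : a < b)
    (hX : ∀ s ∈ Icc a b, AEStronglyMeasurable (X s) μ)
    (hXc : ∀ᵐ ω ∂μ, ContinuousOn (fun s => X s ω) (Icc a b))
    (hB : ∀ u s, a ≤ u → u < s → s ≤ b →
      ∫⁻ ω, ENNReal.ofReal (Real.exp (‖X s ω - X u ω‖ ^ 2 / (c * (s - u)))) ∂μ ≤ B) :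
    ∫⁻ ω, ENNReal.ofReal (Real.exp (holderSemi (fun s => X s ω) a b κ ^ 2 /
        (dyadicHolderConst κ ^ 2 * c * (b - a) ^ (1 - 2 * κ)))) ∂μ
      ≤ ENNReal.ofReal (Real.exp (2 / (1 - 2 * κ))) * (2 * B) := by
  calc ∫⁻ ω, ENNReal.ofReal (Real.exp (holderSemi (fun s => X s ω) a b κ ^ 2 /
        (dyadicHolderConst κ ^ 2 * c * (b - a) ^ (1 - 2 * κ)))) ∂μ
      ≤ ∫⁻ ω, ENNReal.ofReal (Real.exp (2 / (1 - 2 * κ))) *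
          dyadicEnergy c (fun s => X s ω) a b ∂μ :=
        lintegral_mono_ae (hXc.mono fun ω hω =>
          ofReal_exp_holderSemi_sq_le_dyadicEnergy hc hκ0 hκ hab hω)
    _ ≤ ENNReal.ofReal (Real.exp (2 / (1 - 2 * κ))) * (2 * B) := by
        rw [lintegral_const_mul' _ _ ENNReal.ofReal_ne_top]
        gcongr
        exact lintegral_dyadicEnergy_le hab hX hB

end DyadicEnergy

lemma exists_mul_rpow_le_sq {ε α : ℝ} (hε : 0 < ε) (hα : 0 < α) (hα2 : α < 2) (z : ℝ) :
    ∃ K, ∀ x, 0 ≤ x → z * x ^ α ≤ ε * x ^ 2 + K := by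
  obtain ⟨p, hp⟩ : ∃ p, p = 2 / α := ⟨_, rfl⟩
  have hp1 : 1 < p := hp ▸ (one_lt_div hα).2 hα2
  have hp0 : 0 < p := one_pos.trans hp1
  have hpε : 0 < p * ε := mul_pos hp0 hε
  refine ⟨|z / (p * ε) ^ p⁻¹| ^ p.conjExponent / p.conjExponent, fun x hx => ?_⟩
  have hs : 0 < (p * ε) ^ p⁻¹ := Real.rpow_pos_of_pos hpε _
  have hpow : |(p * ε) ^ p⁻¹ * x ^ α| ^ p / p = ε * x ^ 2 := by
    rw [abs_of_nonneg (by positivity), Real.mul_rpow hs.le (by positivity),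
      Real.rpow_inv_rpow hpε.le hp0.ne', ← Real.rpow_mul hx, hp, mul_div_cancel₀ _ hα.ne',
      Real.rpow_two]
    field_simp
  calc z * x ^ α = (p * ε) ^ p⁻¹ * x ^ α * (z / (p * ε) ^ p⁻¹) := by field_simp
    _ ≤ |(p * ε) ^ p⁻¹ * x ^ α| ^ p / p + |z / (p * ε) ^ p⁻¹| ^ p.conjExponent / p.conjExponent :=
        Real.young_inequality _ _ (.conjExponent hp1)
    _ = ε * x ^ 2 + |z / (p * ε) ^ p⁻¹| ^ p.conjExponent / p.conjExponent := by rw [hpow]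

lemma measurable_holderSemi {Ω E : Type*} [MeasurableSpace Ω] [NormedAddCommGroup E]
    {X : ℝ → Ω → E} {a b : ℝ} (κ : ℝ) (hX : ∀ s ∈ Icc a b, StronglyMeasurable (X s))
    (hXc : ∀ ω, ContinuousOn (fun s => X s ω) (Icc a b)) :
    Measurable fun ω => holderSemi (fun s => X s ω) a b κ := by
  set T := {q : ℝ × ℝ // a ≤ q.1 ∧ q.1 < q.2 ∧ q.2 ≤ b}
  have hfst : ∀ p : T, p.1.1 ∈ Icc a b := fun p => ⟨p.2.1, p.2.2.1.le.trans p.2.2.2⟩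
  have hsnd : ∀ p : T, p.1.2 ∈ Icc a b := fun p => ⟨p.2.1.trans p.2.2.1.le, p.2.2.2⟩
  obtain ⟨D, hDc, hD⟩ := TopologicalSpace.exists_countable_dense T
  have hcont : ∀ ω, Continuous fun p : T =>
      ‖X p.1.2 ω - X p.1.1 ω‖ / (p.1.2 - p.1.1) ^ κ := by
    intro ω
    have h1 : Continuous fun p : T => X p.1.1 ω := (hXc ω).comp_continuous (by fun_prop) hfst
    have h2 : Continuous fun p : T => X p.1.2 ω := (hXc ω).comp_continuous (by fun_prop) hsnd
    have h3 : ∀ p : T, p.1.2 - p.1.1 ≠ 0 := fun p => (sub_pos.2 p.2.2.1).ne'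
    refine (h2.sub h1).norm.div (Continuous.rpow_const (by fun_prop) fun p => .inl (h3 p))
      fun p => (Real.rpow_pos_of_pos (sub_pos.2 p.2.2.1) κ).ne'
  have hsup : (fun ω => holderSemi (fun s => X s ω) a b κ) = fun ω => ⨆ p : D,
      ‖X p.1.1.2 ω - X p.1.1.1 ω‖ / (p.1.1.2 - p.1.1.1) ^ κ :=
    funext fun ω => (hD.ciSup' (hcont ω)).symm
  have := hDc.to_subtype
  rw [hsup]
  exact Measurable.iSup fun p =>
    ((hX _ (hsnd p)).sub (hX _ (hfst p))).norm.measurable.div_const _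

lemma intervalIntegral_sq_sub_le {f : ℝ → ℝ} {A a u s : ℝ} (hau : a ≤ u) (hus : u ≤ s)
    (hf : ∀ r ∈ Icc u s, |f r| ≤ A) :
    (∫ r in a..s, f r ^ 2) - ∫ r in a..u, f r ^ 2 ≤ A ^ 2 * (s - u) := by
  by_cases hint : IntervalIntegrable (fun r => f r ^ 2) volume a s
  · have hint' : IntervalIntegrable (fun r => f r ^ 2) volume a u := hint.mono_set (by
      rw [uIcc_of_le hau, uIcc_of_le (hau.trans hus)]
      exact Icc_subset_Icc_right hus)
    rw [intervalIntegral.integral_interval_sub_left hint hint', ← abs_of_nonneg (sub_nonneg.2 hus)]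
    refine (Real.le_norm_self _).trans
      (intervalIntegral.norm_integral_le_of_norm_le_const fun r hr => ?_)
    rw [uIoc_of_le hus] at hr
    rw [Real.norm_of_nonneg (sq_nonneg _), ← sq_abs (f r)]
    exact pow_le_pow_left₀ (abs_nonneg _) (hf r (Ioc_subset_Icc_self hr)) 2
  · -- The first integral is then `0` by convention.
    rw [intervalIntegral.integral_undef hint]
    have := intervalIntegral.integral_nonneg hau (μ := volume) fun r _ => sq_nonneg (f r)
    nlinarith [mul_nonneg (sq_nonneg A) (sub_nonneg.2 hus)]

lemma integrable_exp_and_integral_le_of_lintegral_exp_le {Ω : Type*} {m0 : MeasurableSpace Ω}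
    {μ : Measure Ω} {Y H : Ω → ℝ} {K₀ C : ℝ} (hY : AEMeasurable Y μ)
    (hYH : ∀ ω, Y ω ≤ H ω + K₀) (hC : 0 ≤ C)
    (hH : ∫⁻ ω, ENNReal.ofReal (Real.exp (H ω)) ∂μ ≤ ENNReal.ofReal C) :
    Integrable (fun ω => Real.exp (Y ω)) μ ∧ ∫ ω, Real.exp (Y ω) ∂μ ≤ Real.exp K₀ * C := by
  have hpos : 0 ≤ᵐ[μ] fun ω => Real.exp (Y ω) := ae_of_all _ fun _ => (Real.exp_pos _).le
  have hle : ∫⁻ ω, ENNReal.ofReal (Real.exp (Y ω)) ∂μ ≤ ENNReal.ofReal (Real.exp K₀ * C) := by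
    rw [ENNReal.ofReal_mul (Real.exp_pos _).le]
    refine le_trans ?_ (mul_le_mul_right hH _)
    rw [← lintegral_const_mul' _ _ ENNReal.ofReal_ne_top]
    refine lintegral_mono fun ω => ?_
    rw [← ENNReal.ofReal_mul (Real.exp_pos _).le, ← Real.exp_add, add_comm]
    exact ENNReal.ofReal_le_ofReal (Real.exp_le_exp.2 (hYH ω))
  have hint : Integrable (fun ω => Real.exp (Y ω)) μ :=
    (lintegral_ofReal_ne_top_iff_integrable
      (Real.measurable_exp.comp_aemeasurable hY).aestronglyMeasurable hpos).1
      (ne_top_of_le_ne_top ENNReal.ofReal_ne_top hle)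
  refine ⟨hint, (ENNReal.ofReal_le_ofReal_iff (by positivity)).1 ?_⟩
  rwa [ofReal_integral_eq_lintegral_ofReal hint hpos]

section HolderMoments

variable {Ω : Type*} {m0 : MeasurableSpace Ω} {μ : Measure Ω} [IsProbabilityMeasure μ]
  {ℱ : Filtration ℝ m0} {Z I : ℝ → Ω → ℝ} {a b v κ : ℝ}

lemma lintegral_exp_sq_sub_le_of_condVar_le (hZ : Martingale Z ℱ μ) (hab : a < b) (hv : 0 < v)
    (hZc : ∀ ω, ContinuousOn (fun r => Z r ω) (Icc a b))
    (hZ2 : ∀ r ∈ Icc a b, MemLp (Z r) 2 μ)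
    (hvar : ∀ u s, a ≤ u → u ≤ s → s ≤ b → Var[Z s; μ | ℱ u] ≤ᵐ[μ] fun _ => v * (s - u)) :
    ∫⁻ ω, ENNReal.ofReal (Real.exp (‖Z b ω - Z a ω‖ ^ 2 / (8 * v * (b - a)))) ∂μ
      ≤ ENNReal.ofReal (√2) := by
  have hba : 0 < b - a := sub_pos.2 hab
  obtain ⟨w, hw⟩ : ∃ w : ℝ≥0, (w : ℝ) = (4 * v * (b - a))⁻¹ := ⟨⟨_, by positivity⟩, rfl⟩
  have hhalf : ((2 * v * (b - a)).toNNReal : ℝ) * w = 1 / 2 := by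
    rw [hw, Real.coe_toNNReal _ (by positivity)]
    field_simp
    norm_num
  have hsqrt : (√(1 - 1 / 2))⁻¹ = √2 := by
    rw [← Real.sqrt_inv]
    norm_num
  have := lintegral_exp_sq_le_of_hasSubgaussianMGF (v := w)
    (hasSubgaussianMGF_sub_of_condVar_le hZ hab.le hv.le hZc hZ2 hvar)
    (NNReal.coe_lt_coe.1 (by push_cast; rw [hhalf]; norm_num))
  rw [hhalf, hsqrt, hw] at this
  convert! this using 5 with ω
  rw [Real.norm_eq_abs, sq_abs]
  field_simp
  ring

theorem lintegral_exp_sq_holderSemi_le_of_condVar_le (hZ : Martingale Z ℱ μ) (hab : a < b)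
    (hv : 0 < v) (hκ0 : 0 < κ) (hκ : κ < 1 / 2)
    (hZc : ∀ ω, ContinuousOn (fun r => Z r ω) (Icc a b))
    (hZ2 : ∀ r ∈ Icc a b, MemLp (Z r) 2 μ)
    (hvar : ∀ u s, a ≤ u → u ≤ s → s ≤ b → Var[Z s; μ | ℱ u] ≤ᵐ[μ] fun _ => v * (s - u)) :
    ∫⁻ ω, ENNReal.ofReal (Real.exp (holderSemi (fun s => Z s ω) a b κ ^ 2 /
        (dyadicHolderConst κ ^ 2 * (8 * v) * (b - a) ^ (1 - 2 * κ)))) ∂μ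
      ≤ ENNReal.ofReal (Real.exp (2 / (1 - 2 * κ))) * (2 * ENNReal.ofReal (√2)) :=
  lintegral_exp_sq_holderSemi_le (by positivity) hκ0 hκ hab
    (fun s _ => (hZ.integrable s).aestronglyMeasurable) (ae_of_all _ hZc) fun _ _ hu hus hs =>
      have hsub := Icc_subset_Icc hu hs
      lintegral_exp_sq_sub_le_of_condVar_le hZ hus hv (fun ω => (hZc ω).mono hsub)
        (fun r hr => hZ2 r (hsub hr)) fun u' s' hu' hus' hs' =>
          hvar u' s' (hu.trans hu') hus' (hs'.trans hs)

end HolderMoments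

theorem stmt13_general {a b κ α : ℝ} (v z : ℝ) (hab : a < b) (hκ0 : 0 < κ) (hκ : κ < 1 / 2)
    (hα : 0 < α) (hα2 : α < 2) :
    ∃ K : ℝ, 0 < K ∧ ∀ (Ω : Type*) (m0 : MeasurableSpace Ω) (μ : Measure Ω)
      (_ : IsProbabilityMeasure μ) (ℱ : Filtration ℝ m0) (Z I : ℝ → Ω → ℝ),
      (∀ᵐ ω ∂μ, I a ω = 0) →
      (∀ u s, a ≤ u → u ≤ s → s ≤ b → ∀ᵐ ω ∂μ, I s ω - I u ω ≤ v * (s - u)) →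
      (∀ ω, ContinuousOn (fun s => Z s ω) (Icc a b)) →
      Martingale Z ℱ μ →
      Martingale (fun s ω => Z s ω ^ 2 - I s ω) ℱ μ →
      Integrable (fun ω => Real.exp (z * holderSemi (fun s => Z s ω) a b κ ^ α)) μ ∧
        ∫ ω, Real.exp (z * holderSemi (fun s => Z s ω) a b κ ^ α) ∂μ ≤ K := by
  obtain ⟨w, hvw, hw⟩ : ∃ w, v ≤ w ∧ 0 < w := ⟨max v 1, le_max_left _ _, by simp⟩
  have hD : 0 < dyadicHolderConst κ ^ 2 * (8 * w) * (b - a) ^ (1 - 2 * κ) := by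
    have := dyadicHolderConst_pos hκ0
    have := sub_pos.2 hab
    positivity
  obtain ⟨K₀, hK₀⟩ := exists_mul_rpow_le_sq (inv_pos.2 hD) hα hα2 z
  refine ⟨Real.exp K₀ * (Real.exp (2 / (1 - 2 * κ)) * (2 * √2)), by positivity, ?_⟩
  intro Ω m0 μ _ ℱ Z I hIa hI hZc hZ hM
  have hZ2 : ∀ r ∈ Icc a b, MemLp (Z r) 2 μ := fun r hr => by
    refine memLp_two_of_martingale_sq_sub (c := v * (r - a)) hZ hM ?_
    filter_upwards [hIa, hI a r le_rfl hr.1 hr.2] with ω h0 hω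
    rwa [h0, sub_zero] at hω
  have hvar : ∀ u s, a ≤ u → u ≤ s → s ≤ b →
      Var[Z s; μ | ℱ u] ≤ᵐ[μ] fun _ => w * (s - u) := by
    intro u s hu hus hs
    refine condVar_le_of_martingale_sq_sub hus hZ hM (hZ2 u ⟨hu, hus.trans hs⟩)
      (hZ2 s ⟨hu.trans hus, hs⟩) ((hI u s hu hus hs).mono fun ω hω => hω.trans ?_)
    exact mul_le_mul_of_nonneg_right hvw (sub_nonneg.2 hus)
  have hmeas : Measurable fun ω => holderSemi (fun s => Z s ω) a b κ :=
    measurable_holderSemi κ (fun s _ => (hZ.stronglyMeasurable s).mono (ℱ.le s)) hZc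
  have hsq := lintegral_exp_sq_holderSemi_le_of_condVar_le hZ hab hw hκ0 hκ hZc hZ2 hvar
  refine integrable_exp_and_integral_le_of_lintegral_exp_le
    ((hmeas.pow_const α).const_mul z).aemeasurable (fun ω => ?_) (by positivity)
    (hsq.trans_eq ?_)
  · rw [div_eq_inv_mul]
    exact hK₀ _ (holderSemi_nonneg _ a b κ)
  · rw [ENNReal.ofReal_mul (by positivity), ENNReal.ofReal_mul zero_le_two, ENNReal.ofReal_ofNat]

theorem stmt13 (A κ α z t : ℝ) (hA : 0 ≤ A) (hκ0 : 0 < κ) (hκ : κ < 1/2) (hα : 0 < α) (hα2 : α < 2) (hz : 0 < z) (ht : 0 < t)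

    :
    ∃ K : ℝ, 0 < K ∧
    ∀ (Ω : Type) (m0 : MeasurableSpace Ω) (μ : Measure Ω)
      (_ : IsProbabilityMeasure μ) (ℱ : Filtration ℝ m0)
      (V ξ Z : ℝ → Ω → ℝ),
      -- V is a standard Brownian motion with respect to ℱ:
      (∀ ω, V 0 ω = 0) →
      (∀ ω, Continuous fun s => V s ω) →
      Adapted ℱ V →
      (∀ u s : ℝ, 0 ≤ u → u ≤ s →
        Measure.map (fun ω => V s ω - V u ω) μ = gaussianReal 0 (Real.toNNReal (s - u))) →
      (∀ u s : ℝ, 0 ≤ u → u ≤ s →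
        Indep (MeasurableSpace.comap (fun ω => V s ω - V u ω) Real.measurableSpace) (ℱ u) μ) →
      -- ξ is adapted and bounded by A on [0,t]:
      Adapted ℱ ξ →
      (∀ s ω, s ∈ Set.Icc (0:ℝ) t → |ξ s ω| ≤ A) →
      -- Z is the Itô integral ∫₀^· ξ dV, characterized as the continuous martingale
      -- vanishing at 0 whose quadratic variation is ∫₀^· ξ² dr:
      (∀ ω, Z 0 ω = 0) →
      (∀ ω, Continuous fun s => Z s ω) →
      Martingale Z ℱ μ →
      Martingale (fun s ω => (Z s ω) ^ 2 - ∫ r in (0:ℝ)..s, (ξ r ω) ^ 2) ℱ μ →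
      ∫ ω, Real.exp (z * holderSemi (fun v => Z v ω) 0 t κ ^ α) ∂μ ≤ K := by
  obtain ⟨K, hK, hle⟩ := stmt13_general (A ^ 2) z ht hκ0 hκ hα hα2
  exact ⟨K, hK, fun Ω m0 μ _ ℱ _ ξ Z _ _ _ _ _ _ hξ _ hZc hZ hM =>
    (hle Ω m0 μ ‹_› ℱ Z _ (ae_of_all _ fun _ => intervalIntegral.integral_same)
      (fun _ _ hu hus hs => ae_of_all _ fun ω => intervalIntegral_sq_sub_le hu hus
        fun r hr => hξ r ω ⟨hu.trans hr.1, hr.2.trans hs⟩)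
      (fun ω => (hZc ω).continuousOn) hZ hM).2⟩
end

section
/- Let γ : [0,T] → ℝ^l be μ-Hölder with μ > 1/2, θ ∈ (1−μ, 1/2), and let Y solve the Young differential equation Y_t = Y_0 + ∫_0^t a(Y_s) ds + ∫_0^t c(Y_s) dγ_s (no Wiener term), where a is bounded and c is bounded with bounded derivative. Then ‖Y‖_{0,T,∞} ≤ |Y_0| + 2(‖a‖_∞ + K_{θ,μ}‖γ‖_{0,T,μ}‖c‖_∞)(T^θ + T·(2K_{θ,μ}‖γ‖_{0,T,μ}‖c'‖_∞ + 1)^{(1−θ)/μ}), where K_{θ,μ} is the Young integral constant. -/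
open Finset

/-- `I` is the Young integral `∫_a^b Φ dγ`, as a limit of Riemann–Stieltjes sums. -/
def IsYoungIntegral {E F : Type*} [NormedAddCommGroup E] [NormedSpace ℝ E]
    [NormedAddCommGroup F] [NormedSpace ℝ F]
    (Φ : ℝ → E →L[ℝ] F) (γ : ℝ → E) (a b : ℝ) (I : F) : Prop :=
  ∀ ε > 0, ∃ δ > 0, ∀ (n : ℕ) (t : Fin (n + 1) → ℝ), 0 < n → Monotone t →
    t 0 = a → t (Fin.last n) = b →
    (∀ i : Fin n, t i.succ - t i.castSucc ≤ δ) →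
    ‖(∑ i : Fin n, (Φ (t i.castSucc)) (γ (t i.succ) - γ (t i.castSucc))) - I‖ ≤ ε

/-! Replacing the one-term Riemann–Stieltjes sum of `Φ` against `γ` over an interval of length `L`
by the sum over its two halves changes it by `O(L ^ (μ + θ))`. Halving repeatedly, the changes on
the successive scales decrease by the factor `2 ^ (1 - μ - θ) < 1`, and their geometric series gives
Young's inequality. Applied to `Φ = c ∘ Y` on intervals of length at most `Δ ≤ 1`, where
`K ‖γ‖_μ ‖c'‖_∞ Δ ^ μ ≤ 1 / 2`, it bounds the `θ`-Hölder constant of the solution `Y` by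
`‖a‖_∞ + K ‖γ‖_μ ‖c‖_∞` plus half of itself. So `Y` has `θ`-Hölder constant at most
`2 (‖a‖_∞ + K ‖γ‖_μ ‖c‖_∞)` on each such interval, and `[0, T]` is covered by `⌊T / Δ⌋ + 1` of them.
-/

open scoped NNReal

section Holder

variable {X Y : Type*} [PseudoMetricSpace X] [PseudoMetricSpace Y]

lemma holderOnWith_iff_dist_le {C r : ℝ≥0} {f : X → Y} {s : Set X} :
    HolderOnWith C r f s ↔ ∀ x ∈ s, ∀ y ∈ s, dist (f x) (f y) ≤ C * dist x y ^ (r : ℝ) := by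
  refine forall₄_congr fun x _ y _ => ?_
  rw [edist_nndist, edist_nndist, ← ENNReal.coe_rpow_of_nonneg _ r.coe_nonneg, ← ENNReal.coe_mul,
    ENNReal.coe_le_coe, ← NNReal.coe_le_coe]
  push_cast
  rfl

lemma holderOnWith_iff_dist_le_of_le {C r : ℝ≥0} {f : ℝ → Y} {s : Set ℝ} :
    HolderOnWith C r f s ↔
      ∀ x ∈ s, ∀ y ∈ s, x ≤ y → dist (f x) (f y) ≤ C * (y - x) ^ (r : ℝ) := by
  rw [holderOnWith_iff_dist_le]
  refine ⟨fun h x hx y hy hxy => ?_, fun h x hx y hy => ?_⟩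
  · simpa only [Real.dist_eq, abs_sub_comm x y, abs_of_nonneg (sub_nonneg.2 hxy)] using h x hx y hy
  · rcases le_total x y with hxy | hxy
    · simpa only [Real.dist_eq, abs_sub_comm x y, abs_of_nonneg (sub_nonneg.2 hxy)]
        using h x hx y hy hxy
    · simpa only [Real.dist_eq, dist_comm (f x), abs_of_nonneg (sub_nonneg.2 hxy)]
        using h y hy x hx hxy

lemma holderOnWith_comp_of_lipschitzWith {Z : Type*} [PseudoMetricSpace Z] {C L r : ℝ≥0}
    {f : X → Y} {g : Y → Z} {s : Set X} (hg : LipschitzWith L g) (hf : HolderOnWith C r f s) :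
    HolderOnWith (L * C) r (fun x => g (f x)) s := by
  have := (holderWith_one.2 hg).comp_holderOnWith hf
  rwa [one_mul, NNReal.coe_one, NNReal.rpow_one] at this

lemma isClosed_setOf_holderOnWith (r : ℝ≥0) (f : X → Y) (s : Set X) :
    IsClosed {C : ℝ≥0 | HolderOnWith C r f s} := by
  simp only [holderOnWith_iff_dist_le, Set.ofPred_forall]
  exact isClosed_biInter fun x _ => isClosed_biInter fun y _ =>
    isClosed_le continuous_const (by fun_prop)

-- The least Hölder constant `N` satisfies `N ≤ A + N / 2`.
lemma holderOnWith_two_mul_of_absorb {A C r : ℝ≥0} {f : X → Y} {s : Set X}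
    (hf : HolderOnWith C r f s)
    (habsorb : ∀ B, HolderOnWith B r f s → HolderOnWith (A + B / 2) r f s) :
    HolderOnWith (2 * A) r f s := by
  set S : Set ℝ≥0 := {B | HolderOnWith B r f s}
  have hmem : HolderOnWith (sInf S) r f s :=
    (isClosed_setOf_holderOnWith r f s).csInf_mem ⟨C, hf⟩ (OrderBot.bddBelow S)
  have hle : sInf S ≤ A + sInf S / 2 := csInf_le' (habsorb _ hmem)
  refine hmem.mono_const ?_
  rw [← NNReal.coe_le_coe] at hle ⊢
  push_cast at hle ⊢
  linarith

lemma dist_le_of_holder_of_sub_le {f : ℝ → Y} {B θ Δ a b : ℝ} (hB : 0 ≤ B) (hθ : 0 ≤ θ)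
    (hΔ : 0 < Δ) (hab : a ≤ b)
    (hf : ∀ u v, a ≤ u → u ≤ v → v ≤ b → v - u ≤ Δ → dist (f u) (f v) ≤ B * (v - u) ^ θ) :
    dist (f a) (f b) ≤ B * ((b - a) ^ θ + (b - a) * Δ ^ (θ - 1)) := by
  set n := ⌊(b - a) / Δ⌋₊
  set p : ℕ → ℝ := fun i => a + i * Δ with hp
  have hn : n * Δ ≤ b - a :=
    (le_div_iff₀ hΔ).1 (Nat.floor_le (div_nonneg (sub_nonneg.2 hab) hΔ.le))
  have hn' : b - a < (n + 1) * Δ := (div_lt_iff₀ hΔ).1 (Nat.lt_floor_add_one _)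
  have hp_le {i : ℕ} (hi : i ≤ n) : p i ≤ b := by
    have : (i : ℝ) * Δ ≤ n * Δ := by gcongr
    simp only [hp]
    linarith
  have hle_p (i : ℕ) : a ≤ p i := le_add_of_nonneg_right (by positivity)
  have hp_step (i : ℕ) : p (i + 1) - p i = Δ := by
    simp only [hp]
    push_cast
    ring
  have hsteps : dist (f a) (f (p n)) ≤ n * (B * Δ ^ θ) := by
    have := dist_le_range_sum_of_dist_le (f := fun i => f (p i)) (d := fun _ => B * Δ ^ θ) n
      fun {k} hk => by
        simpa only [hp_step] using hf (p k) (p (k + 1)) (hle_p k)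
          (by linarith [hp_step k]) (hp_le hk) (hp_step k).le
    simpa [hp] using this
  have hlast : dist (f (p n)) (f b) ≤ B * (b - a) ^ θ := by
    refine (hf _ _ (hle_p n) (hp_le le_rfl) le_rfl (by simp only [hp]; linarith)).trans ?_
    have : 0 ≤ b - p n := sub_nonneg.2 (hp_le le_rfl)
    have := hle_p n
    gcongr
  have hcount : n * Δ ^ θ ≤ (b - a) * Δ ^ (θ - 1) := by
    calc n * Δ ^ θ = n * Δ * Δ ^ (θ - 1) := by
          rw [Real.rpow_sub_one hΔ.ne']
          field_simp
      _ ≤ (b - a) * Δ ^ (θ - 1) := by gcongr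
  calc dist (f a) (f b) ≤ n * (B * Δ ^ θ) + B * (b - a) ^ θ :=
        (dist_triangle _ _ _).trans (add_le_add hsteps hlast)
    _ = B * ((b - a) ^ θ + n * Δ ^ θ) := by ring
    _ ≤ B * ((b - a) ^ θ + (b - a) * Δ ^ (θ - 1)) := by gcongr

end Holder

section YoungConst

/-- The constant `K = 1 / (1 - 2 ^ (1 - p))` of Young's inequality for Hölder exponents of sum `p`;
it is only meaningful for `1 < p`, since subtraction in `ℝ≥0` is truncated. -/
noncomputable def youngConst (p : ℝ) : ℝ≥0 := (1 - 2 ^ (1 - p))⁻¹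

variable {p : ℝ}

lemma youngConst_mul_two_rpow_add_one (hp : 1 < p) :
    youngConst p * 2 ^ (1 - p) + 1 = youngConst p := by
  have hlt : (2 : ℝ≥0) ^ (1 - p) < 1 :=
    NNReal.rpow_lt_one_of_one_lt_of_neg one_lt_two (by linarith)
  have hne : 1 - (2 : ℝ≥0) ^ (1 - p) ≠ 0 := (tsub_pos_of_lt hlt).ne'
  calc youngConst p * 2 ^ (1 - p) + 1
      = youngConst p * 2 ^ (1 - p) + youngConst p * (1 - 2 ^ (1 - p)) := by
        rw [youngConst, inv_mul_cancel₀ hne]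
    _ = youngConst p := by rw [← mul_add, add_tsub_cancel_of_le hlt.le, mul_one]

lemma one_le_youngConst (hp : 1 < p) : 1 ≤ youngConst p := by
  rw [← youngConst_mul_two_rpow_add_one hp]
  exact le_add_self

lemma two_mul_youngConst_mul_half_rpow_add (hp : 1 < p) {x : ℝ} (hx : 0 ≤ x) :
    2 * (youngConst p * (x / 2) ^ p) + x ^ p = youngConst p * x ^ p := by
  have hK : (youngConst p * 2 ^ (1 - p) + 1 : ℝ) = youngConst p := by
    simpa using congrArg NNReal.toReal (youngConst_mul_two_rpow_add_one hp)
  rw [Real.rpow_sub two_pos, Real.rpow_one] at hK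
  rw [Real.div_rpow hx two_pos.le]
  linear_combination x ^ p * hK

end YoungConst

lemma induction_on_halving {P : ℝ → ℝ → Prop} {δ : ℝ} (hδ : 0 < δ)
    (small : ∀ u v, u ≤ v → v - u ≤ δ → P u v)
    (halve : ∀ u v, u ≤ v → P u ((u + v) / 2) → P ((u + v) / 2) v → P u v)
    {u v : ℝ} (huv : u ≤ v) : P u v := by
  obtain ⟨n, hn⟩ := pow_unbounded_of_one_lt ((v - u) / δ) (one_lt_two (α := ℝ))
  replace hn : v - u ≤ 2 ^ n * δ := ((div_lt_iff₀ hδ).1 hn).le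
  induction n generalizing u v with
  | zero => exact small u v huv (by simpa using hn)
  | succ n ih =>
    rw [pow_succ] at hn
    exact halve u v huv (ih (by linarith) (by linarith)) (ih (by linarith) (by linarith))

variable {E F : Type*} [NormedAddCommGroup E] [NormedSpace ℝ E]
  [NormedAddCommGroup F] [NormedSpace ℝ F]

section YoungSum

/-- `IsYoungSum Φ γ δ u v S` says that `S` is the left-point Riemann–Stieltjes sum of `Φ` against
`γ` along some subdivision of `[u, v]` of mesh at most `δ`. Subdivisions are kept implicit, so that
sums over adjacent intervals can be added without concatenating sequences of points. -/
inductive IsYoungSum (Φ : ℝ → E →L[ℝ] F) (γ : ℝ → E) (δ : ℝ) : ℝ → ℝ → F → Prop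
  | single {u v : ℝ} (huv : u ≤ v) (hδ : v - u ≤ δ) : IsYoungSum Φ γ δ u v (Φ u (γ v - γ u))
  | cons {u v w : ℝ} {S : F} (huv : u ≤ v) (hδ : v - u ≤ δ) (hS : IsYoungSum Φ γ δ v w S) :
      IsYoungSum Φ γ δ u w (Φ u (γ v - γ u) + S)

variable {Φ : ℝ → E →L[ℝ] F} {γ : ℝ → E} {δ a u v w : ℝ} {I J S S' : F}

lemma IsYoungSum.add (hS : IsYoungSum Φ γ δ u v S) (hS' : IsYoungSum Φ γ δ v w S') :
    IsYoungSum Φ γ δ u w (S + S') := by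
  induction hS with
  | single huv hδ => exact hS'.cons huv hδ
  | cons huv hδ _ ih =>
    rw [add_assoc]
    exact (ih hS').cons huv hδ

lemma exists_isYoungSum (Φ : ℝ → E →L[ℝ] F) (γ : ℝ → E) (hδ : 0 < δ) (huv : u ≤ v) :
    ∃ S, IsYoungSum Φ γ δ u v S :=
  induction_on_halving hδ (P := fun u v => ∃ S, IsYoungSum Φ γ δ u v S)
    (fun _ _ huv hδ => ⟨_, .single huv hδ⟩)
    (fun _ _ _ ⟨_, hS⟩ ⟨_, hS'⟩ => ⟨_, hS.add hS'⟩) huv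

lemma IsYoungSum.exists_monotone (hS : IsYoungSum Φ γ δ u v S) :
    ∃ (n : ℕ) (t : Fin (n + 1) → ℝ), 0 < n ∧ Monotone t ∧ t 0 = u ∧ t (Fin.last n) = v ∧
      (∀ i : Fin n, t i.succ - t i.castSucc ≤ δ) ∧
      ∑ i : Fin n, Φ (t i.castSucc) (γ (t i.succ) - γ (t i.castSucc)) = S := by
  induction hS with
  | @single u v huv hδ =>
    exact ⟨1, ![u, v], one_pos, Fin.monotone_iff_le_succ.2 (by simpa using huv), rfl, rfl,
      by simpa using hδ, by simp⟩
  | @cons u v w S huv hδ _ ih =>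
    obtain ⟨n, t, -, hmono, h0, hlast, hmesh, hsum⟩ := ih
    set t' : Fin (n + 2) → ℝ := Fin.cons u t
    have hmono' : Monotone t' := Fin.monotone_iff_le_succ.2 <| Fin.cases (by simpa [t', h0])
      fun i => by simpa [t', ← Fin.succ_castSucc] using Fin.monotone_iff_le_succ.1 hmono i
    have hmesh' (i : Fin (n + 1)) : t' i.succ - t' i.castSucc ≤ δ :=
      i.cases (by simpa only [t', Fin.cons_succ, h0, Fin.castSucc_zero, Fin.cons_zero]) fun i => by
        simpa [t', ← Fin.succ_castSucc] using hmesh i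
    refine ⟨n + 1, t', n.succ_pos, hmono', rfl, hlast, hmesh', ?_⟩
    rw [Fin.sum_univ_succ, ← hsum]
    simp [t', h0]

lemma IsYoungIntegral.exists_forall_isYoungSum (hI : IsYoungIntegral Φ γ u v I) {ε : ℝ}
    (hε : 0 < ε) : ∃ δ > 0, ∀ δ' ≤ δ, ∀ S, IsYoungSum Φ γ δ' u v S → ‖S - I‖ ≤ ε := by
  obtain ⟨δ, hδ, hsum⟩ := hI ε hε
  refine ⟨δ, hδ, fun δ' hδ' S hS => ?_⟩
  obtain ⟨n, t, hn, hmono, h0, hlast, hmesh, rfl⟩ := hS.exists_monotone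
  exact hsum n t hn hmono h0 hlast fun i => (hmesh i).trans hδ'

lemma IsYoungIntegral.exists_forall_isYoungSum_sub (hI : IsYoungIntegral Φ γ a u I)
    (hJ : IsYoungIntegral Φ γ a v J) (hau : a ≤ u) {ε : ℝ} (hε : 0 < ε) :
    ∃ δ > 0, ∀ S, IsYoungSum Φ γ δ u v S → ‖S - (J - I)‖ ≤ ε := by
  obtain ⟨δ₁, hδ₁, hsum₁⟩ := hI.exists_forall_isYoungSum (half_pos hε)
  obtain ⟨δ₂, hδ₂, hsum₂⟩ := hJ.exists_forall_isYoungSum (half_pos hε)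
  obtain ⟨S₁, hS₁⟩ := exists_isYoungSum Φ γ (lt_min hδ₁ hδ₂) hau
  refine ⟨min δ₁ δ₂, lt_min hδ₁ hδ₂, fun S hS => ?_⟩
  calc ‖S - (J - I)‖ = ‖(S₁ + S - J) - (S₁ - I)‖ := by
        congr 1
        abel
    _ ≤ ε / 2 + ε / 2 := (norm_sub_le _ _).trans <| add_le_add
        (hsum₂ _ (min_le_right _ _) _ (hS₁.add hS)) (hsum₁ _ (min_le_left _ _) _ hS₁)
    _ = ε := add_halves ε

end YoungSum

section YoungEstimate

variable {Φ : ℝ → E →L[ℝ] F} {γ : ℝ → E} {H C θ μ : ℝ≥0} {a b u v w : ℝ} {I J : F}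

lemma norm_sub_apply_sub_le (huv : u ≤ v) (hvw : v ≤ w)
    (hΦ : HolderOnWith H θ Φ (Set.Icc u w)) (hγ : HolderOnWith C μ γ (Set.Icc u w)) :
    ‖(Φ v - Φ u) (γ w - γ v)‖ ≤ H * C * (w - u) ^ (μ + θ : ℝ) := by
  have huw := huv.trans hvw
  have hL : 0 ≤ w - u := sub_nonneg.2 huw
  have hΦ' : ‖Φ v - Φ u‖ ≤ H * (v - u) ^ (θ : ℝ) := by
    simpa only [dist_eq_norm'] using
      holderOnWith_iff_dist_le_of_le.1 hΦ u ⟨le_rfl, huw⟩ v ⟨huv, hvw⟩ huv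
  have hγ' : ‖γ w - γ v‖ ≤ C * (w - v) ^ (μ : ℝ) := by
    simpa only [dist_eq_norm'] using
      holderOnWith_iff_dist_le_of_le.1 hγ v ⟨huv, hvw⟩ w ⟨huw, le_rfl⟩ hvw
  have hθpow : (v - u) ^ (θ : ℝ) ≤ (w - u) ^ (θ : ℝ) :=
    Real.rpow_le_rpow (by linarith) (by linarith) θ.coe_nonneg
  have hμpow : (w - v) ^ (μ : ℝ) ≤ (w - u) ^ (μ : ℝ) :=
    Real.rpow_le_rpow (by linarith) (by linarith) μ.coe_nonneg
  calc ‖(Φ v - Φ u) (γ w - γ v)‖ ≤ ‖Φ v - Φ u‖ * ‖γ w - γ v‖ := ContinuousLinearMap.le_opNorm _ _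
    _ ≤ (H * (w - u) ^ (θ : ℝ)) * (C * (w - u) ^ (μ : ℝ)) := by
      gcongr
      exacts [hΦ'.trans (by gcongr), hγ'.trans (by gcongr)]
    _ = H * C * (w - u) ^ (μ + θ : ℝ) := by
      rw [Real.rpow_add_of_nonneg hL μ.coe_nonneg θ.coe_nonneg]
      ring

-- Halving `[u, v]` at `m` changes the one-term sum by `(Φ m - Φ u) (γ v - γ m)`, which the two
-- halves leave room for since `2 * (x / 2) ^ p = 2 ^ (1 - p) * x ^ p` with `p > 1`.
lemma exists_isYoungSum_norm_sub_le (hp : 1 < (μ + θ : ℝ)) {δ : ℝ} (hδ : 0 < δ) (huv : u ≤ v)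
    (hΦ : HolderOnWith H θ Φ (Set.Icc u v)) (hγ : HolderOnWith C μ γ (Set.Icc u v)) :
    ∃ S, IsYoungSum Φ γ δ u v S ∧
      ‖S - Φ u (γ v - γ u)‖ ≤ H * C * (youngConst (μ + θ) * (v - u) ^ (μ + θ : ℝ)) := by
  revert hΦ hγ
  refine induction_on_halving hδ (P := fun u v => HolderOnWith H θ Φ (Set.Icc u v) →
    HolderOnWith C μ γ (Set.Icc u v) → ∃ S, IsYoungSum Φ γ δ u v S ∧
      ‖S - Φ u (γ v - γ u)‖ ≤ H * C * (youngConst (μ + θ) * (v - u) ^ (μ + θ : ℝ)))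
    ?small ?halve huv
  case small =>
    intro u v huv hle _ _
    refine ⟨_, .single huv hle, ?_⟩
    have : 0 ≤ v - u := sub_nonneg.2 huv
    rw [sub_self, norm_zero]
    positivity
  case halve =>
    intro u v huv ihl ihr hΦ hγ
    set m := (u + v) / 2 with hm
    have hum : u ≤ m := by linarith
    have hmv : m ≤ v := by linarith
    have hleft : Set.Icc u m ⊆ Set.Icc u v := Set.Icc_subset_Icc_right hmv
    have hright : Set.Icc m v ⊆ Set.Icc u v := Set.Icc_subset_Icc_left hum
    obtain ⟨S, hS, hSle⟩ := ihl (hΦ.mono hleft) (hγ.mono hleft)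
    obtain ⟨S', hS', hSle'⟩ := ihr (hΦ.mono hright) (hγ.mono hright)
    have hdefect := norm_sub_apply_sub_le hum hmv hΦ hγ
    rw [show m - u = (v - u) / 2 by rw [hm]; ring] at hSle
    rw [show v - m = (v - u) / 2 by rw [hm]; ring] at hSle'
    refine ⟨S + S', hS.add hS', ?_⟩
    calc ‖S + S' - Φ u (γ v - γ u)‖
        = ‖(S - Φ u (γ m - γ u)) + (S' - Φ m (γ v - γ m)) + (Φ m - Φ u) (γ v - γ m)‖ := by
          congr 1
          simp only [map_sub, sub_apply]
          abel
      _ ≤ _ := norm_add₃_le.trans (add_le_add_three hSle hSle' hdefect)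
      _ = H * C * (2 * (youngConst (μ + θ) * ((v - u) / 2) ^ (μ + θ : ℝ)) +
            (v - u) ^ (μ + θ : ℝ)) := by ring
      _ = _ := by rw [two_mul_youngConst_mul_half_rpow_add hp (sub_nonneg.2 huv)]

lemma IsYoungIntegral.norm_sub_sub_apply_le (hI : IsYoungIntegral Φ γ a u I)
    (hJ : IsYoungIntegral Φ γ a v J) (hau : a ≤ u) (huv : u ≤ v) (hp : 1 < (μ + θ : ℝ))
    (hΦ : HolderOnWith H θ Φ (Set.Icc u v)) (hγ : HolderOnWith C μ γ (Set.Icc u v)) :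
    ‖J - I - Φ u (γ v - γ u)‖ ≤ H * C * (youngConst (μ + θ) * (v - u) ^ (μ + θ : ℝ)) := by
  refine le_of_forall_pos_le_add fun ε hε => ?_
  obtain ⟨δ, hδ, hsum⟩ := hI.exists_forall_isYoungSum_sub hJ hau hε
  obtain ⟨S, hS, hSle⟩ := exists_isYoungSum_norm_sub_le hp hδ huv hΦ hγ
  calc _ = ‖(S - Φ u (γ v - γ u)) - (S - (J - I))‖ := by
        congr 1
        abel
    _ ≤ _ := (norm_sub_le _ _).trans (add_le_add hSle (hsum S hS))

theorem IsYoungIntegral.norm_sub_le (hI : IsYoungIntegral Φ γ a u I)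
    (hJ : IsYoungIntegral Φ γ a v J) (hau : a ≤ u) (huv : u ≤ v) (hp : 1 < (μ + θ : ℝ))
    (hΦ : HolderOnWith H θ Φ (Set.Icc u v)) (hγ : HolderOnWith C μ γ (Set.Icc u v)) :
    ‖J - I‖ ≤ youngConst (μ + θ) * C *
      (‖Φ u‖ * (v - u) ^ (μ : ℝ) + H * (v - u) ^ (μ + θ : ℝ)) := by
  have hγ' : ‖γ v - γ u‖ ≤ C * (v - u) ^ (μ : ℝ) := by
    simpa only [dist_eq_norm'] using
      holderOnWith_iff_dist_le_of_le.1 hγ u ⟨le_rfl, huv⟩ v ⟨huv, le_rfl⟩ huv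
  have hK : (1 : ℝ) ≤ youngConst (μ + θ) := by exact_mod_cast one_le_youngConst hp
  have : 0 ≤ v - u := sub_nonneg.2 huv
  have hfirst : ‖Φ u (γ v - γ u)‖ ≤ youngConst (μ + θ) * (‖Φ u‖ * (C * (v - u) ^ (μ : ℝ))) :=
    ((Φ u).le_opNorm_of_le hγ').trans (le_mul_of_one_le_left (by positivity) hK)
  calc ‖J - I‖ ≤ ‖J - I - Φ u (γ v - γ u)‖ + ‖Φ u (γ v - γ u)‖ := norm_le_norm_sub_add _ _
    _ ≤ _ := add_le_add (hI.norm_sub_sub_apply_le hJ hau huv hp hΦ hγ) hfirst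
    _ = _ := by ring

lemma holderOnWith_of_isYoungIntegral {G : ℝ → F} {M : ℝ≥0} (hp : 1 < (μ + θ : ℝ))
    (hΦM : ∀ t ∈ Set.Icc a b, ‖Φ t‖ ≤ M) (hΦ : HolderOnWith H θ Φ (Set.Icc a b))
    (hγ : HolderOnWith C μ γ (Set.Icc a b))
    (hG : ∀ t ∈ Set.Icc a b, IsYoungIntegral Φ γ a t (G t)) :
    HolderOnWith (youngConst (μ + θ) * C * (M + H * (b - a).toNNReal ^ (θ : ℝ))) μ G
      (Set.Icc a b) := by
  refine holderOnWith_iff_dist_le_of_le.2 fun u hu v hv huv => ?_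
  have hsub : Set.Icc u v ⊆ Set.Icc a b := Set.Icc_subset_Icc hu.1 hv.2
  have hL : 0 ≤ v - u := sub_nonneg.2 huv
  have hlen : v - u ≤ (b - a).toNNReal := (by linarith [hu.1, hv.2] : v - u ≤ b - a).trans
    (Real.le_coe_toNNReal _)
  rw [dist_eq_norm']
  calc ‖G v - G u‖ ≤ youngConst (μ + θ) * C *
        (‖Φ u‖ * (v - u) ^ (μ : ℝ) + H * (v - u) ^ (μ + θ : ℝ)) :=
        (hG u hu).norm_sub_le (hG v hv) hu.1 huv hp (hΦ.mono hsub) (hγ.mono hsub)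
    _ = youngConst (μ + θ) * C * (‖Φ u‖ + H * (v - u) ^ (θ : ℝ)) * (v - u) ^ (μ : ℝ) := by
      rw [Real.rpow_add_of_nonneg hL μ.coe_nonneg θ.coe_nonneg]
      ring
    _ ≤ _ := by
      push_cast
      gcongr
      exact hΦM u hu

end YoungEstimate

section Drift

variable {f : ℝ → F} {M : ℝ≥0} {a b s t : ℝ}

open MeasureTheory in
lemma norm_integral_sub_integral_le (hf : ∀ r ∈ Set.Icc a b, ‖f r‖ ≤ M) (has : a ≤ s) (hst : s ≤ t)
    (htb : t ≤ b) (hint : IntervalIntegrable f volume a t) :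
    ‖(∫ r in a..t, f r) - ∫ r in a..s, f r‖ ≤ M * (t - s) := by
  have hint' : IntervalIntegrable f volume a s := hint.mono_set <| by
    rw [Set.uIcc_of_le has, Set.uIcc_of_le (has.trans hst)]
    exact Set.Icc_subset_Icc_right hst
  rw [intervalIntegral.integral_interval_sub_left hint hint', ← abs_of_nonneg (sub_nonneg.2 hst)]
  refine intervalIntegral.norm_integral_le_of_norm_le_const fun r hr => hf r ?_
  rw [Set.uIoc_of_le hst] at hr
  exact ⟨has.trans hr.1.le, hr.2.trans htb⟩

-- Where `f` is not integrable on `[a, t]`, the primitive at `t` is `0` by convention. Connectedness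
-- of `[s, t]` then gives a point `x` at which the primitive already vanishes and the Lipschitz
-- bound from `s` holds.
open MeasureTheory in
lemma lipschitzOnWith_integral_of_continuousOn (hf : ∀ r ∈ Set.Icc a b, ‖f r‖ ≤ M)
    (hcont : ContinuousOn (fun x => ∫ r in a..x, f r) (Set.Icc a b)) :
    LipschitzOnWith M (fun x => ∫ r in a..x, f r) (Set.Icc a b) := by
  rw [← holderOnWith_one, holderOnWith_iff_dist_le_of_le]
  intro s hs t ht hst
  set P : ℝ → F := fun x => ∫ r in a..x, f r
  rw [NNReal.coe_one, Real.rpow_one, dist_eq_norm']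
  by_cases hint : IntervalIntegrable f volume a t
  · exact norm_integral_sub_integral_le hf hs.1 hst ht.2 hint
  have hPt : P t = 0 := intervalIntegral.integral_undef hint
  have hP : ContinuousOn P (Set.Icc s t) := hcont.mono (Set.Icc_subset_Icc hs.1 ht.2)
  have hclosed₁ : IsClosed {x ∈ Set.Icc s t | ‖P x - P s‖ ≤ M * (x - s)} :=
    isClosed_Icc.isClosed_le (hP.sub continuousOn_const).norm (by fun_prop)
  have hclosed₂ : IsClosed {x ∈ Set.Icc s t | ‖P x‖ ≤ 0} :=
    isClosed_Icc.isClosed_le hP.norm continuousOn_const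
  obtain ⟨x, -, hx₁, hx₂⟩ := isPreconnected_closed_iff.1 isPreconnected_Icc _ _ hclosed₁ hclosed₂
    (fun x hx => by
      by_cases hint : IntervalIntegrable f volume a x
      · exact .inl ⟨hx, norm_integral_sub_integral_le hf hs.1 hx.1 (hx.2.trans ht.2) hint⟩
      · exact .inr ⟨hx, (norm_eq_zero.2 (intervalIntegral.integral_undef hint)).le⟩)
    ⟨s, Set.left_mem_Icc.2 hst, Set.left_mem_Icc.2 hst, by simp⟩
    ⟨t, Set.right_mem_Icc.2 hst, Set.right_mem_Icc.2 hst, by simp [hPt]⟩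
  calc ‖P t - P s‖ = ‖P x - P s‖ := by rw [hPt, norm_le_zero_iff.1 hx₂.2]
    _ ≤ M * (x - s) := hx₁.2
    _ ≤ M * (t - s) := by
      gcongr
      exact hx₂.1.2

end Drift

section YoungSolution

/-- `Y` solves the Young equation `Y_t = Y_0 + D_t + ∫_0^t c(Y_s) dγ_s` on `[0, T]`, with an
arbitrary drift path `D` (in applications `D_t = ∫_0^t a(Y_s) ds`). -/
def IsYoungSolution (c : F → E →L[ℝ] F) (γ : ℝ → E) (D Y : ℝ → F) (T : ℝ) : Prop :=
  ∀ t ∈ Set.Icc 0 T, IsYoungIntegral (fun r => c (Y r)) γ 0 t (Y t - Y 0 - D t)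

namespace IsYoungSolution

variable {c : F → E →L[ℝ] F} {γ : ℝ → E} {D Y : ℝ → F} {T u v Δ : ℝ} {Cγ CY Ma Mc Lc B μ θ : ℝ≥0}

lemma continuousOn_drift (hY : IsYoungSolution c γ D Y T) (hp : 1 < (μ + θ : ℝ)) (hμ : 0 < μ)
    (hθ : 0 < θ) (hγ : HolderOnWith Cγ μ γ (Set.Icc 0 T)) (hc : ∀ x, ‖c x‖ ≤ Mc)
    (hcLip : LipschitzWith Lc c) (hYθ : HolderOnWith CY θ Y (Set.Icc 0 T)) :
    ContinuousOn D (Set.Icc 0 T) := by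
  have hint : ContinuousOn (fun t => Y t - Y 0 - D t) (Set.Icc 0 T) :=
    (holderOnWith_of_isYoungIntegral hp (fun t _ => hc (Y t))
      (holderOnWith_comp_of_lipschitzWith hcLip hYθ) hγ hY).continuousOn hμ
  exact (((hYθ.continuousOn hθ).sub continuousOn_const).sub hint).congr
    fun t _ => (sub_sub_cancel (Y t - Y 0) (D t)).symm

lemma holderOnWith_add_half (hY : IsYoungSolution c γ D Y T) (hp : 1 < (μ + θ : ℝ)) (hθμ : θ ≤ μ)
    (hθ : θ ≤ 1) (hθ0 : 0 < θ) (hγ : HolderOnWith Cγ μ γ (Set.Icc 0 T)) (hc : ∀ x, ‖c x‖ ≤ Mc)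
    (hcLip : LipschitzWith Lc c) (hD : LipschitzOnWith Ma D (Set.Icc 0 T))
    (hΔ : Δ ≤ 1) (hΔμ : youngConst (μ + θ) * Cγ * Lc * Δ ^ (μ : ℝ) ≤ 1 / 2)
    (hu : 0 ≤ u) (hv : v ≤ T) (huv : v - u ≤ Δ) (hYB : HolderOnWith B θ Y (Set.Icc u v)) :
    HolderOnWith (Ma + youngConst (μ + θ) * Cγ * Mc + B / 2) θ Y (Set.Icc u v) := by
  refine holderOnWith_iff_dist_le_of_le.2 fun x hx y hy hxy => ?_
  have hsub : Set.Icc x y ⊆ Set.Icc u v := Set.Icc_subset_Icc hx.1 hy.2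
  have hsubT : Set.Icc u v ⊆ Set.Icc 0 T := Set.Icc_subset_Icc hu hv
  have hL : 0 ≤ y - x := sub_nonneg.2 hxy
  have hLΔ : y - x ≤ Δ := by linarith [hx.1, hy.2]
  have hpow_mono {p : ℝ} (hθp : θ ≤ p) : (y - x) ^ p ≤ (y - x) ^ (θ : ℝ) :=
    Real.rpow_le_rpow_of_exponent_ge_of_imp hL (hLΔ.trans hΔ) hθp
      fun _ h => absurd h ((NNReal.coe_pos.2 hθ0).trans_le hθp).ne'
  have hlin : y - x ≤ (y - x) ^ (θ : ℝ) := by simpa using hpow_mono (p := 1) (mod_cast hθ)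
  have hμpow : (y - x) ^ (μ : ℝ) ≤ (y - x) ^ (θ : ℝ) := hpow_mono (mod_cast hθμ)
  have hsmall : youngConst (μ + θ) * Cγ * Lc * (y - x) ^ (μ : ℝ) ≤ 1 / 2 := hΔμ.trans' (by gcongr)
  have hdrift : ‖D y - D x‖ ≤ Ma * (y - x) := by
    simpa only [dist_eq_norm, Real.norm_eq_abs, abs_of_nonneg hL] using
      hD.dist_le_mul y (hsubT hy) x (hsubT hx)
  have hyoung := (hY x (hsubT hx)).norm_sub_le (hY y (hsubT hy)) (hsubT hx).1 hxy hp
    (holderOnWith_comp_of_lipschitzWith hcLip (hYB.mono hsub)) (hγ.mono (hsub.trans hsubT))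
  rw [dist_eq_norm']
  push_cast at hyoung ⊢
  calc ‖Y y - Y x‖ = ‖(D y - D x) + ((Y y - Y 0 - D y) - (Y x - Y 0 - D x))‖ := by
        congr 1
        abel
    _ ≤ Ma * (y - x) + youngConst (μ + θ) * Cγ *
          (Mc * (y - x) ^ (μ : ℝ) + Lc * B * (y - x) ^ (μ + θ : ℝ)) :=
      (norm_add_le _ _).trans (add_le_add hdrift (hyoung.trans (by gcongr; exact hc _)))
    _ = Ma * (y - x) + youngConst (μ + θ) * Cγ * Mc * (y - x) ^ (μ : ℝ) +
          youngConst (μ + θ) * Cγ * Lc * (y - x) ^ (μ : ℝ) * (B * (y - x) ^ (θ : ℝ)) := by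
      rw [Real.rpow_add_of_nonneg hL μ.coe_nonneg θ.coe_nonneg]
      ring
    _ ≤ Ma * (y - x) ^ (θ : ℝ) + youngConst (μ + θ) * Cγ * Mc * (y - x) ^ (θ : ℝ) +
          1 / 2 * (B * (y - x) ^ (θ : ℝ)) := by gcongr
    _ = _ := by ring

lemma norm_le_of_mul_rpow_le_half (hY : IsYoungSolution c γ D Y T) (hp : 1 < (μ + θ : ℝ))
    (hθμ : θ ≤ μ) (hθ : θ ≤ 1) (hθ0 : 0 < θ) (hγ : HolderOnWith Cγ μ γ (Set.Icc 0 T))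
    (hc : ∀ x, ‖c x‖ ≤ Mc) (hcLip : LipschitzWith Lc c) (hD : LipschitzOnWith Ma D (Set.Icc 0 T))
    (hYθ : HolderOnWith CY θ Y (Set.Icc 0 T)) (hΔ0 : 0 < Δ) (hΔ : Δ ≤ 1)
    (hΔμ : youngConst (μ + θ) * Cγ * Lc * Δ ^ (μ : ℝ) ≤ 1 / 2) {s : ℝ} (hs : s ∈ Set.Icc 0 T) :
    ‖Y s‖ ≤ ‖Y 0‖ + 2 * (Ma + youngConst (μ + θ) * Cγ * Mc) *
      (T ^ (θ : ℝ) + T * Δ ^ (θ - 1 : ℝ)) := by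
  obtain ⟨hs0, hsT⟩ := hs
  have hlocal (u v : ℝ) (hu : 0 ≤ u) (huv : u ≤ v) (hv : v ≤ s) (hlen : v - u ≤ Δ) :
      dist (Y u) (Y v) ≤ 2 * (Ma + youngConst (μ + θ) * Cγ * Mc) * (v - u) ^ (θ : ℝ) := by
    have hvT := hv.trans hsT
    have hHolder := holderOnWith_two_mul_of_absorb (hYθ.mono (Set.Icc_subset_Icc hu hvT))
      fun _ hYB => hY.holderOnWith_add_half hp hθμ hθ hθ0 hγ hc hcLip hD hΔ hΔμ hu hvT hlen hYB
    exact mod_cast holderOnWith_iff_dist_le_of_le.1 hHolder u ⟨le_rfl, huv⟩ v ⟨huv, le_rfl⟩ huv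
  calc ‖Y s‖ ≤ ‖Y 0‖ + dist (Y 0) (Y s) := by
        rw [dist_eq_norm']
        exact norm_le_norm_add_norm_sub' _ _
    _ ≤ ‖Y 0‖ + 2 * (Ma + youngConst (μ + θ) * Cγ * Mc) *
          ((s - 0) ^ (θ : ℝ) + (s - 0) * Δ ^ (θ - 1 : ℝ)) := by
      gcongr
      exact dist_le_of_holder_of_sub_le (by positivity) θ.coe_nonneg hΔ0 hs0 hlocal
    _ ≤ _ := by
      rw [sub_zero]
      gcongr

theorem norm_le (hY : IsYoungSolution c γ D Y T) (hp : 1 < (μ + θ : ℝ)) (hθμ : θ ≤ μ)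
    (hθ : θ ≤ 1) (hθ0 : 0 < θ) (hγ : HolderOnWith Cγ μ γ (Set.Icc 0 T)) (hc : ∀ x, ‖c x‖ ≤ Mc)
    (hcLip : LipschitzWith Lc c) (hD : LipschitzOnWith Ma D (Set.Icc 0 T))
    (hYθ : HolderOnWith CY θ Y (Set.Icc 0 T)) {s : ℝ} (hs : s ∈ Set.Icc 0 T) :
    ‖Y s‖ ≤ ‖Y 0‖ + 2 * (Ma + youngConst (μ + θ) * Cγ * Mc) *
      (T ^ (θ : ℝ) + T * (2 * youngConst (μ + θ) * Cγ * Lc + 1) ^ ((1 - θ) / μ : ℝ)) := by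
  have hμ0 : (0 : ℝ) < μ := mod_cast hθ0.trans_le hθμ
  set R : ℝ := 2 * youngConst (μ + θ) * Cγ * Lc + 1
  have hR : 1 ≤ R := le_add_of_nonneg_left (by positivity)
  have hR0 : 0 < R := one_pos.trans_le hR
  set Δ := R ^ (-1 / μ : ℝ) with hΔ
  have hΔ1 : Δ ≤ 1 := Real.rpow_le_one_of_one_le_of_nonpos hR
    (div_nonpos_of_nonpos_of_nonneg (by norm_num) hμ0.le)
  have hΔθ : Δ ^ (θ - 1 : ℝ) = R ^ ((1 - θ) / μ : ℝ) := by
    rw [hΔ, ← Real.rpow_mul hR0.le]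
    congr 1
    ring
  have hΔμ : youngConst (μ + θ) * Cγ * Lc * Δ ^ (μ : ℝ) ≤ 1 / 2 := by
    rw [hΔ, ← Real.rpow_mul hR0.le, div_mul_cancel₀ _ hμ0.ne', Real.rpow_neg_one,
      ← div_eq_mul_inv, div_le_iff₀ hR0]
    linarith
  rw [← hΔθ]
  exact hY.norm_le_of_mul_rpow_le_half hp hθμ hθ hθ0 hγ hc hcLip hD hYθ
    (Real.rpow_pos_of_pos hR0 _) hΔ1 hΔμ hs

end IsYoungSolution
end YoungSolution

theorem stmt15_general [CompleteSpace F] {μ θ T Cγ Ma Mc Lc CY : ℝ} (hθ0 : 0 < θ) (hθ1 : θ ≤ 1)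
    (hθμ : θ ≤ μ) (hp : 1 < μ + θ) {γ : ℝ → E} {a : F → F} {c : F → E →L[ℝ] F} {Y : ℝ → F}
    (hCγ : 0 ≤ Cγ) (hMa : 0 ≤ Ma) (hMc : 0 ≤ Mc) (hLc : 0 ≤ Lc) (hCY : 0 ≤ CY)
    (hγ : ∀ u v, 0 ≤ u → u ≤ v → v ≤ T → ‖γ v - γ u‖ ≤ Cγ * (v - u) ^ μ)
    (ha : ∀ x, ‖a x‖ ≤ Ma) (hc : ∀ x, ‖c x‖ ≤ Mc) (hcLip : ∀ x y, ‖c x - c y‖ ≤ Lc * ‖x - y‖)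
    (hsol : ∀ s ∈ Set.Icc 0 T, ∃ I, IsYoungIntegral (fun r => c (Y r)) γ 0 s I ∧
      Y s = Y 0 + (∫ r in (0 : ℝ)..s, a (Y r)) + I)
    (hYθ : ∀ u v, 0 ≤ u → u ≤ v → v ≤ T → ‖Y v - Y u‖ ≤ CY * (v - u) ^ θ)
    {s : ℝ} (hs : s ∈ Set.Icc 0 T) :
    ‖Y s‖ ≤ ‖Y 0‖ + 2 * (Ma + youngConst (μ + θ) * Cγ * Mc) *
      (T ^ θ + T * (2 * youngConst (μ + θ) * Cγ * Lc + 1) ^ ((1 - θ) / μ)) := by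
  lift μ to ℝ≥0 using hθ0.le.trans hθμ
  lift θ to ℝ≥0 using hθ0.le
  lift Cγ to ℝ≥0 using hCγ
  lift Ma to ℝ≥0 using hMa
  lift Mc to ℝ≥0 using hMc
  lift Lc to ℝ≥0 using hLc
  lift CY to ℝ≥0 using hCY
  replace hθ0 : 0 < θ := mod_cast hθ0
  have hγ' : HolderOnWith Cγ μ γ (Set.Icc 0 T) := holderOnWith_iff_dist_le_of_le.2
    fun u hu v hv huv => by simpa only [dist_eq_norm'] using hγ u v hu.1 huv hv.2
  have hYθ' : HolderOnWith CY θ Y (Set.Icc 0 T) := holderOnWith_iff_dist_le_of_le.2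
    fun u hu v hv huv => by simpa only [dist_eq_norm'] using hYθ u v hu.1 huv hv.2
  have hcLip' : LipschitzWith Lc c := .of_dist_le_mul
    fun x y => by simpa only [dist_eq_norm] using hcLip x y
  have hY : IsYoungSolution c γ (fun t => ∫ r in (0 : ℝ)..t, a (Y r)) Y T := fun t ht => by
    obtain ⟨I, hI, hYt⟩ := hsol t ht
    rwa [hYt, add_assoc, add_sub_cancel_left, add_sub_cancel_left]
  have hdrift := lipschitzOnWith_integral_of_continuousOn (fun r _ => ha (Y r))
    (hY.continuousOn_drift hp (hθ0.trans_le hθμ) hθ0 hγ' hc hcLip' hYθ')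
  exact hY.norm_le hp hθμ hθ1 hθ0 hγ' hc hcLip' hdrift hYθ' hs


theorem stmt15 (μ θ : ℝ) (hμ : 1/2 < μ) (hμ1 : μ < 1) (hθ : 1 - μ < θ) (hθ1 : θ < 1/2) :
    ∃ K : ℝ, 0 < K ∧
    ∀ (d l : ℕ) (T : ℝ), 0 < T →
    ∀ (γ : ℝ → EuclideanSpace ℝ (Fin l))
      (a : EuclideanSpace ℝ (Fin d) → EuclideanSpace ℝ (Fin d))
      (c : EuclideanSpace ℝ (Fin d) → (EuclideanSpace ℝ (Fin l) →L[ℝ] EuclideanSpace ℝ (Fin d)))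
      (Y : ℝ → EuclideanSpace ℝ (Fin d)) (Cγ Ma Mc Lc : ℝ),
      0 ≤ Cγ → 0 ≤ Ma → 0 ≤ Mc → 0 ≤ Lc →
      -- γ is μ-Hölder on [0,T] with constant Cγ:
      (∀ u v, 0 ≤ u → u ≤ v → v ≤ T → ‖γ v - γ u‖ ≤ Cγ * (v - u) ^ μ) →
      -- a is bounded, c is bounded with bounded derivative (Lipschitz constant Lc):
      (∀ x, ‖a x‖ ≤ Ma) → (∀ x, ‖c x‖ ≤ Mc) →
      (∀ x y, ‖c x - c y‖ ≤ Lc * ‖x - y‖) →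
      -- Y solves the Young differential equation Y_t = Y_0 + ∫₀^t a(Y_s) ds + ∫₀^t c(Y_s) dγ_s,
      -- and is a θ-Hölder continuous solution:
      (∀ s ∈ Set.Icc (0:ℝ) T, ∃ I, IsYoungIntegral (fun r => c (Y r)) γ 0 s I ∧
        Y s = Y 0 + (∫ r in (0:ℝ)..s, a (Y r)) + I) →
      ContinuousOn Y (Set.Icc 0 T) →
      (∃ CY : ℝ, 0 ≤ CY ∧ ∀ u v, 0 ≤ u → u ≤ v → v ≤ T → ‖Y v - Y u‖ ≤ CY * (v - u) ^ θ) →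
      ∀ s ∈ Set.Icc (0:ℝ) T,
        ‖Y s‖ ≤ ‖Y 0‖ + 2 * (Ma + K * Cγ * Mc) *
          (T ^ θ + T * (2 * K * Cγ * Lc + 1) ^ ((1 - θ) / μ)) := by
  exact ⟨youngConst (μ + θ), one_pos.trans_le (mod_cast one_le_youngConst (by linarith)),
    fun d l T _ γ a c Y Cγ Ma Mc Lc hCγ hMa hMc hLc hγ ha hc hcLip hsol _ ⟨_, hCY, hYθ⟩ s hs =>
      stmt15_general (by linarith) (by linarith) (by linarith) (by linarith) hCγ hMa hMc hLc hCY
        hγ ha hc hcLip hsol hYθ hs⟩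
end
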